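/- arXiv:2603.21773 — 8 statements merged into one kernel-verified Lean document; each statement's English description precedes it below -/
import Mathlib

section
/- Let m ≥ 1 be an integer, θ0 ∈ (0, π/(2m)), and let L ∈ A be invertible with σ(L) ⊆ S(θ0). Then for every z ∈ S(θ0), the spectrum of the element ∑_{k=0}^{m-1} z^{k+1-m} (L^{-1})^k is contained in the open right half-plane {w ∈ ℂ : Re w > 0}; in particular the geometric sum G_m(z L^{-1}) := ∑_{k=0}^{m-1} (z L^{-1})^k is invertible in A. -/
open Complex

/-- The closed sector (origin removed) of half-angle `θ0` around the positive real axis: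
`S(θ0) = {ρ e^{iθ} : ρ > 0, |θ| ≤ θ0}`. -/
def sector (θ0 : ℝ) : Set ℂ :=
  {z : ℂ | ∃ ρ θ : ℝ, 0 < ρ ∧ |θ| ≤ θ0 ∧ z = ρ * Complex.exp (θ * Complex.I)}

/-!
A product of `n` elements of `sector θ` or of their inverses lies in `sector (n * θ)`. Hence, for
`z` and `w` in `sector θ`, each `z ^ (k + 1 - m) * w ^ k` with `k < m` is a product of
`(m - 1 - k) + k = m - 1` such factors and lies in `sector ((m - 1) * θ)`, which is inside the right
half-plane as soon as `(m - 1) * θ < π / 2`. By the spectral mapping theorem for polynomials,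
applied to `L⁻¹`, the same positivity holds for the spectrum of the sum. The geometric sum is
`z ^ (m - 1)` times this element, whose spectrum omits `0`.
-/

section Sector

variable {z w : ℂ} {α β θ : ℝ}

lemma ne_zero_of_mem_sector (hz : z ∈ sector θ) : z ≠ 0 := by
  obtain ⟨r, s, hr, -, rfl⟩ := hz
  exact mul_ne_zero (ofReal_ne_zero.2 hr.ne') (exp_ne_zero _)

lemma mul_mem_sector (hz : z ∈ sector α) (hw : w ∈ sector β) : z * w ∈ sector (α + β) := by
  obtain ⟨r, s, hr, hs, rfl⟩ := hz
  obtain ⟨ρ, t, hρ, ht, rfl⟩ := hw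
  refine ⟨r * ρ, s + t, mul_pos hr hρ, (abs_add_le s t).trans (add_le_add hs ht), ?_⟩
  push_cast
  rw [add_mul, exp_add]
  ring

lemma zpow_mem_sector (hz : z ∈ sector θ) (n : ℤ) : z ^ n ∈ sector (|(n : ℝ)| * θ) := by
  obtain ⟨r, s, hr, hs, rfl⟩ := hz
  refine ⟨r ^ n, n * s, zpow_pos hr n, ?_, ?_⟩
  · rw [abs_mul]
    gcongr
  · rw [mul_zpow, ← exp_int_mul]
    push_cast
    rw [mul_assoc]

lemma pow_mem_sector (hz : z ∈ sector θ) (n : ℕ) : z ^ n ∈ sector (n * θ) := by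
  simpa using zpow_mem_sector hz n

lemma inv_mem_sector (hz : z ∈ sector θ) : z⁻¹ ∈ sector θ := by
  simpa using zpow_mem_sector hz (-1)

lemma re_pos_of_mem_sector (hθ : θ < Real.pi / 2) (hz : z ∈ sector θ) : 0 < z.re := by
  obtain ⟨r, s, hr, hs, rfl⟩ := hz
  rw [re_ofReal_mul, exp_ofReal_mul_I_re]
  exact mul_pos hr (Real.cos_pos_of_mem_Ioo (abs_lt.1 (hs.trans_lt hθ)))

lemma zpow_mul_pow_mem_sector {m k : ℕ} (hk : k < m) (hz : z ∈ sector θ) (hw : w ∈ sector θ) :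
    z ^ ((k : ℤ) + 1 - m) * w ^ k ∈ sector ((m - 1) * θ) := by
  have hkm : (k : ℝ) + 1 - m ≤ 0 := sub_nonpos.2 (by exact_mod_cast hk)
  convert mul_mem_sector (zpow_mem_sector hz ((k : ℤ) + 1 - m)) (pow_mem_sector hw k) using 2
  push_cast
  rw [abs_of_nonpos hkm]
  ring

lemma re_sum_zpow_mul_pow_pos {m : ℕ} (hm : 1 ≤ m) (hθ : (m - 1) * θ < Real.pi / 2)
    (hz : z ∈ sector θ) (hw : w ∈ sector θ) :
    0 < (∑ k ∈ Finset.range m, z ^ ((k : ℤ) + 1 - m) * w ^ k).re := by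
  rw [re_sum]
  exact Finset.sum_pos
    (fun k hk ↦ re_pos_of_mem_sector hθ (zpow_mul_pow_mem_sector (Finset.mem_range.1 hk) hz hw))
    (Finset.nonempty_range_iff.2 (Nat.one_le_iff_ne_zero.1 hm))

end Sector

lemma spectrum_ringInverse {𝕜 A : Type*} [Field 𝕜] [Ring A] [Algebra 𝕜 A] {a : A}
    (ha : IsUnit a) : spectrum 𝕜 (Ring.inverse a) = (spectrum 𝕜 a)⁻¹ := by
  obtain ⟨u, rfl⟩ := ha
  rw [Ring.inverse_unit, spectrum.map_inv]

-- The superset `S` replaces `spectrum 𝕜 a`, which may be empty: then the spectral mapping theorem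
-- fails for constant polynomials.
lemma spectrum_aeval_subset_image {𝕜 A : Type*} [Field 𝕜] [IsAlgClosed 𝕜] [Ring A] [Algebra 𝕜 A]
    {a : A} {S : Set 𝕜} (hS : S.Nonempty) (ha : spectrum 𝕜 a ⊆ S) (p : Polynomial 𝕜) :
    spectrum 𝕜 (Polynomial.aeval a p) ⊆ (p.eval ·) '' S := by
  nontriviality A
  rcases lt_or_ge 0 p.degree with hp | hp
  · rw [spectrum.map_polynomial_aeval_of_degree_pos a p hp]
    exact Set.image_mono ha
  · rw [Polynomial.eq_C_of_degree_le_zero hp, Polynomial.aeval_C, spectrum.scalar_eq]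
    simp only [Polynomial.eval_C, hS.image_const, subset_rfl]

lemma spectrum_sum_smul_pow_subset_image {𝕜 A : Type*} [Field 𝕜] [IsAlgClosed 𝕜] [Ring A]
    [Algebra 𝕜 A] {a : A} {S : Set 𝕜} (hS : S.Nonempty) (ha : spectrum 𝕜 a ⊆ S)
    (s : Finset ℕ) (c : ℕ → 𝕜) :
    spectrum 𝕜 (∑ k ∈ s, c k • a ^ k) ⊆ (fun x ↦ ∑ k ∈ s, c k * x ^ k) '' S := by
  simpa only [map_sum, Polynomial.aeval_monomial, ← Algebra.smul_def, Polynomial.eval_finsetSum,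
    Polynomial.eval_monomial] using
    spectrum_aeval_subset_image hS ha (∑ k ∈ s, Polynomial.monomial k (c k))

lemma geom_sum_smul_eq_zpow_smul_sum {𝕜 A : Type*} [Semifield 𝕜] [Semiring A] [Algebra 𝕜 A]
    {z : 𝕜} (hz : z ≠ 0) (a : A) (m : ℕ) :
    ∑ k ∈ Finset.range m, (z • a) ^ k =
      z ^ ((m : ℤ) - 1) • ∑ k ∈ Finset.range m, z ^ ((k : ℤ) + 1 - m) • a ^ k := by
  rw [Finset.smul_sum]
  refine Finset.sum_congr rfl fun k _ ↦ ?_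
  have exponent_add : (m : ℤ) - 1 + (k + 1 - m) = k := by ring
  rw [smul_smul, ← zpow_add₀ hz, exponent_add, zpow_natCast, smul_pow]

theorem stmt1_general {A : Type*} [Ring A] [Algebra ℂ A] {m : ℕ} (hm : 1 ≤ m) {θ : ℝ}
    (hθ : (m - 1) * θ < Real.pi / 2) {L : A} (hσ : spectrum ℂ L ⊆ sector θ)
    {z : ℂ} (hz : z ∈ sector θ) :
    spectrum ℂ (∑ k ∈ Finset.range m, (z ^ ((k : ℤ) + 1 - m)) • (Ring.inverse L) ^ k)
        ⊆ {w : ℂ | 0 < w.re} ∧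
      IsUnit (∑ k ∈ Finset.range m, (z • Ring.inverse L) ^ k) := by
  have hL : IsUnit L :=
    (spectrum.zero_notMem_iff ℂ).1 fun h ↦ ne_zero_of_mem_sector (hσ h) rfl
  have spectrum_inverse : spectrum ℂ (Ring.inverse L) ⊆ sector θ := fun w hw ↦ by
    rw [spectrum_ringInverse hL] at hw
    simpa only [inv_inv] using inv_mem_sector (hσ hw)
  have re_pos : spectrum ℂ (∑ k ∈ Finset.range m, z ^ ((k : ℤ) + 1 - m) • Ring.inverse L ^ k)
      ⊆ {w : ℂ | 0 < w.re} :=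
    (spectrum_sum_smul_pow_subset_image ⟨z, hz⟩ spectrum_inverse _ _).trans
      (Set.image_subset_iff.2 fun _ hw ↦ re_sum_zpow_mul_pow_pos hm hθ hz hw)
  refine ⟨re_pos, ?_⟩
  have hz0 : z ≠ 0 := ne_zero_of_mem_sector hz
  rw [geom_sum_smul_eq_zpow_smul_sum hz0]
  have sum_isUnit := (spectrum.zero_notMem_iff ℂ).1 fun h ↦ lt_irrefl (0 : ℝ) (re_pos h)
  exact sum_isUnit.smul (Units.mk0 _ (zpow_ne_zero _ hz0))

/-- Let `A` be a complex unital Banach algebra, `m ≥ 1`,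
`θ0 ∈ (0, π/(2m))`, and let `L ∈ A` be invertible with `σ(L) ⊆ S(θ0)`. Then for every
`z ∈ S(θ0)`, the spectrum of `∑_{k=0}^{m-1} z^{k+1-m} (L⁻¹)^k` is contained in the open
right half-plane; in particular `G_m(zL⁻¹) = ∑_{k=0}^{m-1} (zL⁻¹)^k` is invertible. -/
theorem stmt1 {A : Type*} [NormedRing A] [NormedAlgebra ℂ A] [CompleteSpace A]
    (m : ℕ) (hm : 1 ≤ m) (θ0 : ℝ) (hθ0 : 0 < θ0) (hθ0' : θ0 < Real.pi / (2 * m))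
    (L : A) (hL : IsUnit L) (hσ : spectrum ℂ L ⊆ sector θ0) :
    ∀ z ∈ sector θ0,
      spectrum ℂ (∑ k ∈ Finset.range m, (z ^ ((k : ℤ) + 1 - m)) • (Ring.inverse L) ^ k)
        ⊆ {w : ℂ | 0 < w.re} ∧
      IsUnit (∑ k ∈ Finset.range m, (z • Ring.inverse L) ^ k) := by
  have hθ : (m - 1) * θ0 < Real.pi / 2 := by
    rw [lt_div_iff₀ (by positivity)] at hθ0'
    linarith
  exact fun z hz ↦ stmt1_general hm hθ hσ hz
end

section
/- Let E be a complex Banach space, U ⊆ ℂ an open set, g : U → E holomorphic on U, and φ : ℂ → ℂ a continuously differentiable function with compact support contained in U. Then ∫_U (∂̄φ)(z) · g(z) dA(z) = 0. -/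
open MeasureTheory

/-- The Cauchy–Riemann operator `∂̄u := ½(∂_x u + i ∂_y u)`, where `ℂ` is identified with
`ℝ²` and the partial derivatives are real directional derivatives in the directions `1`
and `i`. -/
noncomputable def dbar (f : ℂ → ℂ) (z : ℂ) : ℂ :=
  (1 / 2) * (fderiv ℝ f z 1 + Complex.I * fderiv ℝ f z Complex.I)

/-!
For a compactly supported `φ`, integration by parts in the real directions `1` and `i` gives
`∫ ∂̄φ • g = -∫ φ • ∂̄g`, and the Cauchy–Riemann equations give `∂̄g = 0` wherever `g` is
holomorphic, in particular on the support of `φ`.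
-/

section IntegrationByParts

variable {X 𝕜 E : Type*} [NormedField 𝕜] [NormedAddCommGroup E] [NormedSpace 𝕜 E]
  [MeasurableSpace X] {μ : Measure X} {φ : X → 𝕜} {g : X → E}

lemma integrable_smul_of_hasCompactSupport [TopologicalSpace X] [OpensMeasurableSpace X]
    [IsFiniteMeasureOnCompacts μ] (hφ : Continuous φ) (hφc : HasCompactSupport φ)
    (hg : ContinuousOn g (tsupport φ)) : Integrable (fun x ↦ φ x • g x) μ := by
  have hsupp : Function.support (fun x ↦ φ x • g x) ⊆ tsupport φ :=
    (Function.support_smul_subset_left φ g).trans (subset_tsupport φ)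
  rw [← integrableOn_iff_integrable_of_support_subset hsupp]
  exact (hφ.continuousOn.smul hg).integrableOn_compact' hφc.isCompact
    (isClosed_tsupport φ).measurableSet

variable [NormedAddCommGroup X] [NormedSpace ℝ X] [BorelSpace X]

lemma integrable_fderiv_apply_smul_of_hasCompactSupport [NormedAlgebra ℝ 𝕜]
    [IsFiniteMeasureOnCompacts μ] (hφ : ContDiff ℝ 1 φ) (hφc : HasCompactSupport φ)
    (hg : ContinuousOn g (tsupport φ)) (v : X) :
    Integrable (fun x ↦ fderiv ℝ φ x v • g x) μ :=
  integrable_smul_of_hasCompactSupport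
    ((hφ.continuous_fderiv one_ne_zero).clm_apply continuous_const)
    (hφc.fderiv_apply ℝ v) (hg.mono (tsupport_fderiv_apply_subset ℝ v))

lemma integrable_smul_fderiv_apply_of_hasCompactSupport [NormedSpace ℝ E]
    [IsFiniteMeasureOnCompacts μ] (hφ : Continuous φ) (hφc : HasCompactSupport φ)
    (hg : ∀ x ∈ tsupport φ, ContDiffAt ℝ 1 g x) (v : X) :
    Integrable (fun x ↦ φ x • fderiv ℝ g x v) μ :=
  integrable_smul_of_hasCompactSupport hφ hφc fun x hx ↦
    (((hg x hx).continuousAt_fderiv one_ne_zero).clm_apply continuousAt_const).continuousWithinAt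

lemma integral_fderiv_apply_smul_eq_neg_of_hasCompactSupport [NormedAlgebra ℝ 𝕜]
    [NormedSpace ℝ E] [IsScalarTower ℝ 𝕜 E] [FiniteDimensional ℝ X] [μ.IsAddHaarMeasure]
    (hφ : ContDiff ℝ 1 φ) (hφc : HasCompactSupport φ)
    (hg : ∀ x ∈ tsupport φ, ContDiffAt ℝ 1 g x) (v : X) :
    ∫ x, fderiv ℝ φ x v • g x ∂μ = -∫ x, φ x • fderiv ℝ g x v ∂μ := by
  have hg_cont : ContinuousOn g (tsupport φ) :=
    fun x hx ↦ (hg x hx).continuousAt.continuousWithinAt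
  rw [integral_smul_fderiv_eq_neg_fderiv_smul_of_integrable
    (integrable_fderiv_apply_smul_of_hasCompactSupport hφ hφc hg_cont v)
    (integrable_smul_fderiv_apply_of_hasCompactSupport hφ.continuous hφc hg v)
    (integrable_smul_of_hasCompactSupport hφ.continuous hφc hg_cont)
    (fun x _ ↦ hφ.differentiable one_ne_zero x)
    (fun x hx ↦ (hg x hx).differentiableAt one_ne_zero), neg_neg]

end IntegrationByParts

section CauchyRiemannOperator

variable {E : Type*} [NormedAddCommGroup E] [NormedSpace ℂ E] {φ : ℂ → ℂ} {g : ℂ → E} {z : ℂ}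

/-- The Cauchy–Riemann operator `∂̄` for functions with values in a complex normed space; it
lets `∂̄` be moved from a scalar test function, where it is `dbar`, to a vector-valued `g`. -/
noncomputable def vectorDbar (g : ℂ → E) (z : ℂ) : E :=
  (1 / 2 : ℂ) • (fderiv ℝ g z 1 + Complex.I • fderiv ℝ g z Complex.I)

lemma vectorDbar_eq_zero_of_differentiableAt (hg : DifferentiableAt ℂ g z) :
    vectorDbar g z = 0 := by
  have cauchy_riemann : fderiv ℝ g z Complex.I = Complex.I • fderiv ℝ g z 1 :=
    (differentiableAt_complex_iff_differentiableAt_real.1 hg).2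
  rw [vectorDbar, cauchy_riemann, smul_smul, Complex.I_mul_I, neg_one_smul, add_neg_cancel,
    smul_zero]

lemma support_dbar_subset : Function.support (dbar φ) ⊆ tsupport φ := by
  intro z hz
  contrapose! hz
  simp [dbar, fderiv_of_notMem_tsupport ℝ hz]

theorem integral_dbar_smul_eq_neg_integral_smul_vectorDbar (hφ : ContDiff ℝ 1 φ)
    (hφc : HasCompactSupport φ) (hg : ∀ z ∈ tsupport φ, ContDiffAt ℝ 1 g z) :
    ∫ z, dbar φ z • g z = -∫ z, φ z • vectorDbar g z := by
  have hg_cont : ContinuousOn g (tsupport φ) :=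
    fun z hz ↦ (hg z hz).continuousAt.continuousWithinAt
  have hφ_int (v : ℂ) : Integrable fun z ↦ fderiv ℝ φ z v • g z :=
    integrable_fderiv_apply_smul_of_hasCompactSupport hφ hφc hg_cont v
  have hg_int (v : ℂ) : Integrable fun z ↦ φ z • fderiv ℝ g z v :=
    integrable_smul_fderiv_apply_of_hasCompactSupport hφ.continuous hφc hg v
  have by_parts (v : ℂ) : ∫ z, fderiv ℝ φ z v • g z = -∫ z, φ z • fderiv ℝ g z v :=
    integral_fderiv_apply_smul_eq_neg_of_hasCompactSupport hφ hφc hg v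
  calc ∫ z, dbar φ z • g z
      = ∫ z, (1 / 2 : ℂ) •
          (fderiv ℝ φ z 1 • g z + Complex.I • fderiv ℝ φ z Complex.I • g z) := by
        simp only [dbar, mul_smul, add_smul]
    _ = (1 / 2 : ℂ) • ((∫ z, fderiv ℝ φ z 1 • g z) +
          Complex.I • ∫ z, fderiv ℝ φ z Complex.I • g z) := by
        rw [integral_smul, integral_add (hφ_int 1) ((hφ_int Complex.I).fun_smul Complex.I),
          integral_smul]
    _ = -((1 / 2 : ℂ) • ((∫ z, φ z • fderiv ℝ g z 1) +
          Complex.I • ∫ z, φ z • fderiv ℝ g z Complex.I)) := by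
        rw [by_parts, by_parts]
        module
    _ = -∫ z, (1 / 2 : ℂ) •
          (φ z • fderiv ℝ g z 1 + Complex.I • φ z • fderiv ℝ g z Complex.I) := by
        rw [integral_smul, integral_add (hg_int 1) ((hg_int Complex.I).fun_smul Complex.I),
          integral_smul]
    _ = -∫ z, φ z • vectorDbar g z := by
        simp only [vectorDbar, smul_add, smul_comm (φ _)]

end CauchyRiemannOperator

/-- Let `E` be a complex Banach space, `U ⊆ ℂ` open, `g : U → E`
holomorphic, and `φ : ℂ → ℂ` continuously differentiable with compact support contained
in `U`. Then `∫_U (∂̄φ)(z) • g(z) dA(z) = 0`. -/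
theorem stmt5 {E : Type*} [NormedAddCommGroup E] [NormedSpace ℂ E] [CompleteSpace E]
    (U : Set ℂ) (hU : IsOpen U) (g : ℂ → E) (hg : DifferentiableOn ℂ g U)
    (φ : ℂ → ℂ) (hφ : ContDiff ℝ 1 φ) (hφc : HasCompactSupport φ)
    (hφU : tsupport φ ⊆ U) :
    ∫ z in U, dbar φ z • g z = 0 := by
  have hg_holo : ∀ z ∈ tsupport φ, AnalyticAt ℂ g z :=
    fun z hz ↦ hg.analyticAt (hU.mem_nhds (hφU hz))
  have hφ_dbar (z : ℂ) : φ z • vectorDbar g z = 0 := by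
    by_cases hz : z ∈ tsupport φ
    · rw [vectorDbar_eq_zero_of_differentiableAt (hg_holo z hz).differentiableAt, smul_zero]
    · rw [image_eq_zero_of_notMem_tsupport hz, zero_smul]
  have hsupp : ∀ z ∉ U, dbar φ z • g z = 0 := fun z hz ↦ by
    rw [Function.notMem_support.1 fun h ↦ hz (hφU (support_dbar_subset h)), zero_smul]
  calc ∫ z in U, dbar φ z • g z
      = ∫ z, dbar φ z • g z := setIntegral_eq_integral_of_forall_compl_eq_zero hsupp
    _ = -∫ z, φ z • vectorDbar g z :=
        integral_dbar_smul_eq_neg_integral_smul_vectorDbar hφ hφc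
          fun z hz ↦ (hg_holo z hz).contDiffAt.restrict_scalars ℝ
    _ = 0 := by simp only [hφ_dbar, integral_zero, neg_zero]
end

section
/- Let E be a complex Banach space, let c < d be real numbers and a > 0, and let g be holomorphic on an open set U ⊆ ℂ containing the closed half-strip {x + iy : c ≤ x ≤ d, 0 ≤ y ≤ a}. Let φ : ℂ → ℂ be continuously differentiable with compact support contained in the open rectangle {x + iy : c < x < d, −a < y < a}. Then ∫_{{z ∈ ℂ : Im z > 0}} (∂̄φ)(z) · g(z) dA(z) = (1/(2i)) ∫_c^d φ(x) g(x) dx. -/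
open MeasureTheory

/-!
Since `∂̄g = 0`, the product `u = φ • g` satisfies `∂̄u = ∂̄φ • g`, and `2i ∂̄u = i ∂_x u - ∂_y u`
is the integrand in Green's formula. On a rectangle resting on the real axis and containing the
part of the support of `u` in the closed upper half-plane, only the bottom side contributes to the
boundary integral.
-/

open Complex Set

section Support

variable {X : Type*} [TopologicalSpace X]

theorem continuousOn_smul_of_forall_mem_tsupport {𝕜 E : Type*} [Zero 𝕜] [Zero E] [SMulWithZero 𝕜 E]
    [TopologicalSpace 𝕜] [TopologicalSpace E] [ContinuousSMul 𝕜 E] {φ : X → 𝕜} {g : X → E}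
    {s : Set X} (hφ : ContinuousOn φ s)
    (hg : ∀ x ∈ tsupport φ, x ∈ s → ContinuousWithinAt g s x) :
    ContinuousOn (fun x => φ x • g x) s := by
  intro x hx
  by_cases hxφ : x ∈ tsupport φ
  · exact (hφ x hx).smul (hg x hxφ hx)
  · have hzero : (fun y => φ y • g y) =ᶠ[nhds x] fun _ => 0 :=
      notMem_tsupport_iff_eventuallyEq.1 fun h => hxφ (tsupport_smul_subset_left φ g h)
    exact (continuousAt_const.congr hzero.symm).continuousWithinAt

theorem integrableOn_of_continuousOn_of_hasCompactSupport {E : Type*} [NormedAddCommGroup E]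
    [MeasurableSpace X] [OpensMeasurableSpace X] {μ : Measure X} [IsFiniteMeasureOnCompacts μ]
    {f : X → E} {s : Set X} (hs : IsClosed s) (hf : ContinuousOn f s)
    (hfc : HasCompactSupport f) : IntegrableOn f s μ := by
  have hint : IntegrableOn f (s ∩ tsupport f) μ :=
    (hf.mono inter_subset_left).integrableOn_compact' (hfc.isCompact.inter_left hs)
      (hs.inter (isClosed_tsupport f)).measurableSet
  exact hint.of_forall_sdiff_eq_zero hs.measurableSet fun _ hx =>
    image_eq_zero_of_notMem_tsupport fun h => hx.2 ⟨hx.1, h⟩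

end Support

section Dbar

variable {φ : ℂ → ℂ}

theorem continuous_dbar (hφ : ContDiff ℝ 1 φ) : Continuous (dbar φ) := by
  have hφ' : Continuous (fderiv ℝ φ) := hφ.continuous_fderiv one_ne_zero
  exact continuous_const.mul ((hφ'.clm_apply continuous_const).add
    (continuous_const.mul (hφ'.clm_apply continuous_const)))

theorem tsupport_dbar_subset : tsupport (dbar φ) ⊆ tsupport φ :=
  (tsupport_comp_subset (g := fun L : ℂ →L[ℝ] ℂ => (1 / 2) * (L 1 + I * L I)) (by simp) _).trans
    (tsupport_fderiv_subset ℝ)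

end Dbar

section Green

theorem setIntegral_reProdIm {E : Type*} [NormedAddCommGroup E] [NormedSpace ℝ E] {f : ℂ → E}
    {s t : Set ℝ} (hf : IntegrableOn f (s ×ℂ t)) :
    ∫ z in s ×ℂ t, f z = ∫ x in s, ∫ y in t, f (x + y * I) := by
  have hpre : measurableEquivRealProd.symm ⁻¹' (s ×ℂ t) = s ×ˢ t := rfl
  have hmp := volume_preserving_equiv_real_prod.symm
  have hemb := measurableEquivRealProd.symm.measurableEmbedding
  rw [← hmp.integrableOn_comp_preimage hemb, hpre, Measure.volume_eq_prod] at hf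
  rw [← hmp.setIntegral_preimage_emb hemb, hpre, Measure.volume_eq_prod]
  refine (setIntegral_prod _ hf).trans ?_
  simp only [Function.comp_apply, measurableEquivRealProd_symm_apply, mk_eq_add_mul_I]

theorem exists_tsupport_subset_reProdIm_Ioo {α : Type*} [Zero α] {u : ℂ → α}
    (hu : HasCompactSupport u) :
    ∃ R > 0, tsupport u ⊆ Ioo (-R) R ×ℂ Ioo (-R) R := by
  obtain ⟨R, hR, huR⟩ := hu.isCompact.isBounded.subset_ball_lt 0 0
  refine ⟨R, hR, fun z hz => ?_⟩
  have hzR : ‖z‖ < R := mem_ball_zero_iff.1 (huR hz)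
  exact ⟨abs_lt.1 ((abs_re_le_norm z).trans_lt hzR), abs_lt.1 ((abs_im_le_norm z).trans_lt hzR)⟩

variable {E : Type*} [NormedAddCommGroup E] [NormedSpace ℂ E]

theorem integral_integral_I_smul_sub_eq_integral_of_tsupport_subset {u : ℂ → E}
    {u' : ℂ → ℂ →L[ℝ] E} {R : ℝ} (hR : 0 < R) (huR : tsupport u ⊆ Ioo (-R) R ×ℂ Ioo (-R) R)
    (hu : ContinuousOn u {z | 0 ≤ z.im}) (hu' : ∀ z, 0 < z.im → HasFDerivAt u (u' z) z)
    (hint : IntegrableOn (fun z => I • u' z 1 - u' z I) {z | 0 ≤ z.im}) :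
    ∫ x in -R..R, ∫ y in (0 : ℝ)..R, (I • u' (x + y * I) 1 - u' (x + y * I) I) =
      ∫ x in -R..R, u x := by
  have hzero : ∀ z : ℂ, ¬(z.re ∈ Ioo (-R) R ∧ z.im ∈ Ioo (-R) R) → u z = 0 :=
    fun z hz => image_eq_zero_of_notMem_tsupport fun h => hz (huR h)
  have htop : ∀ x : ℝ, u (x + R * I) = 0 := fun x => hzero _ (by simp)
  have hright : ∀ y : ℝ, u (R + y * I) = 0 := fun y => hzero _ (by simp)
  have hleft : ∀ y : ℝ, u (-R + y * I) = 0 := fun y => hzero _ (by simp)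
  have hsub : uIcc (-R) R ×ℂ uIcc 0 R ⊆ {z : ℂ | 0 ≤ z.im} := by
    rw [uIcc_of_le hR.le]
    exact fun z hz => hz.2.1
  have hgreen := integral_boundary_rect_of_continuousOn_of_hasFDerivAt_real u u' ⟨-R, 0⟩ ⟨R, R⟩
    (hu.mono hsub)
    (fun z hz => hu' z <| by
      rw [min_eq_left hR.le] at hz
      exact hz.2.1)
    (hint.mono_set hsub)
  simpa [htop, hright, hleft] using hgreen.symm

theorem setIntegral_im_pos_eq_integral_of_hasFDerivAt {u : ℂ → E} {u' : ℂ → ℂ →L[ℝ] E}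
    (huc : HasCompactSupport u) (hu : ContinuousOn u {z | 0 ≤ z.im})
    (hu' : ∀ z, 0 < z.im → HasFDerivAt u (u' z) z)
    (hint : IntegrableOn (fun z => I • u' z 1 - u' z I) {z | 0 ≤ z.im}) :
    ∫ z in {z | 0 < z.im}, (I • u' z 1 - u' z I) = ∫ x : ℝ, u x := by
  obtain ⟨R, hR, huR⟩ := exists_tsupport_subset_reProdIm_Ioo huc
  have hu'_zero : ∀ z, 0 < z.im → z ∉ tsupport u → u' z = 0 := fun z hz hzu =>
    (hu' z hz).fderiv.symm.trans (fderiv_of_notMem_tsupport ℝ hzu)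
  have hsupp : (fun x : ℝ => u x).support ⊆ Ioc (-R) R := fun x hx =>
    Ioo_subset_Ioc_self (huR (subset_tsupport u hx)).1
  calc ∫ z in {z | 0 < z.im}, (I • u' z 1 - u' z I)
    _ = ∫ z in Ioc (-R) R ×ℂ Ioc 0 R, (I • u' z 1 - u' z I) := by
      refine setIntegral_eq_of_subset_of_forall_sdiff_eq_zero
        (measurableSet_lt measurable_const measurable_im) (fun z hz => hz.2.1) ?_
      rintro z ⟨hz, hzR⟩
      have hzu : z ∉ tsupport u := fun h =>
        hzR ⟨Ioo_subset_Ioc_self (huR h).1, hz, (huR h).2.2.le⟩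
      simp [hu'_zero z hz hzu]
    _ = ∫ x in -R..R, ∫ y in (0 : ℝ)..R, (I • u' (x + y * I) 1 - u' (x + y * I) I) := by
      rw [setIntegral_reProdIm (hint.mono_set fun z hz => hz.2.1.le),
        intervalIntegral.integral_of_le (neg_le_self hR.le)]
      simp only [intervalIntegral.integral_of_le hR.le]
    _ = ∫ x in -R..R, u x :=
      integral_integral_I_smul_sub_eq_integral_of_tsupport_subset hR huR hu hu' hint
    _ = ∫ x : ℝ, u x := intervalIntegral.integral_eq_integral_of_support_subset hsupp

end Green

section Product

variable {E : Type*} [NormedAddCommGroup E] [NormedSpace ℂ E] {φ : ℂ → ℂ}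

theorem hasFDerivAt_smul_of_mem_tsupport_imp {g : ℂ → E} {z : ℂ} (hφ : DifferentiableAt ℝ φ z)
    (hg : z ∈ tsupport φ → DifferentiableAt ℂ g z) :
    HasFDerivAt (fun w => φ w • g w)
      (φ z • (fderiv ℂ g z).restrictScalars ℝ + (fderiv ℝ φ z).smulRight (g z)) z := by
  by_cases hz : z ∈ tsupport φ
  · exact hφ.hasFDerivAt.smul ((hg hz).hasFDerivAt.restrictScalars ℝ)
  · simpa [image_eq_zero_of_notMem_tsupport hz, fderiv_of_notMem_tsupport ℝ hz] using
      HasFDerivAt.of_notMem_tsupport ℝ fun h => hz (tsupport_smul_subset_left φ g h)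

theorem I_smul_sub_eq_two_mul_I_smul_dbar_smul (A : ℂ →L[ℂ] E) (v : E) (z : ℂ) :
    I • (φ z • A.restrictScalars ℝ + (fderiv ℝ φ z).smulRight v) 1 -
        (φ z • A.restrictScalars ℝ + (fderiv ℝ φ z).smulRight v) I =
      (2 * I) • (dbar φ z • v) := by
  have hA : A I = I • A 1 := by rw [← map_smul, smul_eq_mul, mul_one]
  have hdbar : 2 * I * dbar φ z = I * fderiv ℝ φ z 1 - fderiv ℝ φ z I := by
    rw [dbar]
    linear_combination fderiv ℝ φ z I * I_mul_I
  simp only [add_apply, smul_apply, ContinuousLinearMap.coe_restrictScalars',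
    ContinuousLinearMap.smulRight_apply, hA]
  rw [smul_smul (2 * I), hdbar]
  module

end Product

theorem stmt6_general {E : Type*} [NormedAddCommGroup E] [NormedSpace ℂ E] [CompleteSpace E]
    {φ : ℂ → ℂ} (hφ : ContDiff ℝ 1 φ) (hφc : HasCompactSupport φ) {g : ℂ → E}
    (hgc : ∀ z ∈ tsupport φ, 0 ≤ z.im → ContinuousWithinAt g {w | 0 ≤ w.im} z)
    (hg : ∀ z ∈ tsupport φ, 0 < z.im → DifferentiableAt ℂ g z) :
    ∫ z in {z : ℂ | 0 < z.im}, dbar φ z • g z = (1 / (2 * I)) • ∫ x : ℝ, φ x • g x := by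
  have hdbar_cont : ContinuousOn (fun z => dbar φ z • g z) {z | 0 ≤ z.im} :=
    continuousOn_smul_of_forall_mem_tsupport (continuous_dbar hφ).continuousOn
      fun z hz => hgc z (tsupport_dbar_subset hz)
  have hdbar_supp : HasCompactSupport (dbar φ) :=
    hφc.of_isClosed_subset (isClosed_tsupport _) tsupport_dbar_subset
  have hdbar_int : IntegrableOn (fun z => dbar φ z • g z) {z | 0 ≤ z.im} :=
    integrableOn_of_continuousOn_of_hasCompactSupport
      (isClosed_le continuous_const continuous_im) hdbar_cont hdbar_supp.smul_right
  have hgreen := setIntegral_im_pos_eq_integral_of_hasFDerivAt (u := fun z => φ z • g z)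
    hφc.smul_right
    (continuousOn_smul_of_forall_mem_tsupport hφ.continuous.continuousOn hgc)
    (fun z hz => hasFDerivAt_smul_of_mem_tsupport_imp (hφ.differentiable one_ne_zero z)
      fun hzφ => hg z hzφ hz)
    (by
      simp only [I_smul_sub_eq_two_mul_I_smul_dbar_smul]
      exact hdbar_int.smul (2 * I))
  simp only [I_smul_sub_eq_two_mul_I_smul_dbar_smul, integral_smul] at hgreen
  rw [← hgreen, one_div, inv_smul_smul₀ (mul_ne_zero two_ne_zero I_ne_zero)]

/-- Let `E` be a complex Banach space, `c < d`, `a > 0`, and let `g` be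
holomorphic on an open set `U ⊆ ℂ` containing the closed half-strip
`{x+iy : c ≤ x ≤ d, 0 ≤ y ≤ a}`. Let `φ : ℂ → ℂ` be `C¹` with compact support contained
in the open rectangle `{x+iy : c < x < d, -a < y < a}`. Then
`∫_{Im z > 0} (∂̄φ)(z) • g(z) dA(z) = (1/(2i)) ∫_c^d φ(x) • g(x) dx`. -/
theorem stmt6 {E : Type*} [NormedAddCommGroup E] [NormedSpace ℂ E] [CompleteSpace E]
    (c d a : ℝ) (hcd : c < d) (ha : 0 < a)
    (U : Set ℂ) (hU : IsOpen U)
    (hUstrip : {z : ℂ | c ≤ z.re ∧ z.re ≤ d ∧ 0 ≤ z.im ∧ z.im ≤ a} ⊆ U)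
    (g : ℂ → E) (hg : DifferentiableOn ℂ g U)
    (φ : ℂ → ℂ) (hφ : ContDiff ℝ 1 φ) (hφc : HasCompactSupport φ)
    (hφsupp : tsupport φ ⊆ {z : ℂ | c < z.re ∧ z.re < d ∧ -a < z.im ∧ z.im < a}) :
    ∫ z in {z : ℂ | 0 < z.im}, dbar φ z • g z
      = (1 / (2 * Complex.I)) • ∫ x in c..d, φ (x : ℂ) • g (x : ℂ) := by
  have hsupp : (fun x : ℝ => φ x • g x).support ⊆ Ioc c d := fun x hx =>
    have hxφ := hφsupp (subset_tsupport φ (left_ne_zero_of_smul hx))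
    ⟨hxφ.1, hxφ.2.1.le⟩
  have hgd : ∀ z ∈ tsupport φ, 0 ≤ z.im → DifferentiableAt ℂ g z := fun z hzφ hz =>
    have ⟨hcz, hzd, _, hza⟩ := hφsupp hzφ
    hg.differentiableAt (hU.mem_nhds (hUstrip ⟨hcz.le, hzd.le, hz, hza.le⟩))
  rw [intervalIntegral.integral_eq_integral_of_support_subset hsupp]
  exact stmt6_general hφ hφc (fun z hzφ hz => (hgd z hzφ hz).continuousAt.continuousWithinAt)
    fun z hzφ hz => hgd z hzφ hz.le
end

section
/- Let N ∈ ℕ, let f : ℝ → ℂ be of class C^{N+1}, let χ : ℝ² → ℂ be differentiable, and define the almost-analytic extension f̃(x + iy) := (∑_{k=0}^{N} f^{(k)}(x) (iy)^k / k!) · χ(x, y). Then at every point z = x + iy ∈ ℂ one has ∂̄f̃(z) = ½ · f^{(N+1)}(x) · (iy)^N / N! · χ(x, y) + (∑_{k=0}^{N} f^{(k)}(x) (iy)^k / k!) · (∂̄χ)(x, y). -/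
/-!
The operator `∂̄` is a derivation, so it acts on the Taylor sum term by term. On functions of `x`
it is `½ ∂_x` and on functions of `y` it is `½ i ∂_y`, which sends `(iy)^k / k!` to
`-½ (iy)^(k-1) / (k-1)!`. Each term therefore contributes half the difference of two consecutive
members of the sequence `f^{(k)}(x) (iy)^(k-1) / (k-1)!`, and the sum telescopes.
-/

open Complex Finset

section CauchyRiemann

variable {u v : ℂ → ℂ} {g : ℝ → ℂ} {z : ℂ}

lemma dbar_mul (hu : DifferentiableAt ℝ u z) (hv : DifferentiableAt ℝ v z) :
    dbar (fun w ↦ u w * v w) z = dbar u z * v z + u z * dbar v z := by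
  simp only [dbar, fderiv_fun_mul hu hv, add_apply, smul_apply, smul_eq_mul]
  ring

lemma dbar_sum {ι : Type*} {s : Finset ι} {u : ι → ℂ → ℂ}
    (hu : ∀ i ∈ s, DifferentiableAt ℝ (u i) z) :
    dbar (fun w ↦ ∑ i ∈ s, u i w) z = ∑ i ∈ s, dbar (u i) z := by
  simp only [dbar, fderiv_fun_sum hu, _root_.sum_apply, mul_sum, ← sum_add_distrib]

lemma dbar_comp_re (hg : DifferentiableAt ℝ g z.re) :
    dbar (fun w ↦ g w.re) z = (1 / 2) * deriv g z.re := by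
  have h : HasFDerivAt (fun w : ℂ ↦ g w.re) _ z :=
    hg.hasDerivAt.hasFDerivAt.comp z reCLM.hasFDerivAt
  simp [dbar, h.fderiv]

lemma dbar_comp_im (hg : DifferentiableAt ℝ g z.im) :
    dbar (fun w ↦ g w.im) z = (1 / 2) * (I * deriv g z.im) := by
  have h : HasFDerivAt (fun w : ℂ ↦ g w.im) _ z :=
    hg.hasDerivAt.hasFDerivAt.comp z imCLM.hasFDerivAt
  simp [dbar, h.fderiv]

end CauchyRiemann

section TaylorTerm

lemma hasDerivAt_I_mul_ofReal_pow_div_factorial (k : ℕ) (y : ℝ) :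
    HasDerivAt (fun t : ℝ ↦ (I * t) ^ k / (k.factorial : ℂ))
      (I * (k * (I * y) ^ (k - 1) / (k.factorial : ℂ))) y := by
  have h : HasDerivAt (fun t : ℝ ↦ I * (t : ℂ)) I y := by
    simpa using (hasDerivAt_id y).ofReal_comp.const_mul I
  exact ((h.fun_pow k).div_const (k.factorial : ℂ)).congr_deriv (by ring)

variable {g : ℝ → ℂ} {z : ℂ}

lemma dbar_I_mul_im_pow_div_factorial (k : ℕ) (z : ℂ) :
    dbar (fun w ↦ (I * w.im) ^ k / (k.factorial : ℂ)) z =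
      -(1 / 2) * (k * (I * z.im) ^ (k - 1) / (k.factorial : ℂ)) := by
  have h := hasDerivAt_I_mul_ofReal_pow_div_factorial k z.im
  rw [dbar_comp_im (g := fun t : ℝ ↦ (I * t) ^ k / (k.factorial : ℂ)) h.differentiableAt, h.deriv,
    ← mul_assoc I I, I_mul_I]
  ring

lemma differentiableAt_I_mul_im_pow_div_factorial (k : ℕ) (z : ℂ) :
    DifferentiableAt ℝ (fun w : ℂ ↦ (I * w.im) ^ k / (k.factorial : ℂ)) z :=
  (hasDerivAt_I_mul_ofReal_pow_div_factorial k z.im).differentiableAt.comp z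
    imCLM.differentiableAt

lemma differentiableAt_comp_re_mul_I_mul_im_pow_div_factorial (k : ℕ)
    (hg : DifferentiableAt ℝ g z.re) :
    DifferentiableAt ℝ (fun w : ℂ ↦ g w.re * (I * w.im) ^ k / (k.factorial : ℂ)) z := by
  simp only [mul_div_assoc (g _)]
  exact (hg.comp z reCLM.differentiableAt).mul (differentiableAt_I_mul_im_pow_div_factorial k z)

lemma dbar_comp_re_mul_I_mul_im_pow_div_factorial (k : ℕ) (hg : DifferentiableAt ℝ g z.re) :
    dbar (fun w ↦ g w.re * (I * w.im) ^ k / (k.factorial : ℂ)) z =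
      (1 / 2) * (deriv g z.re * ((I * z.im) ^ k / (k.factorial : ℂ)) -
        g z.re * (k * (I * z.im) ^ (k - 1) / (k.factorial : ℂ))) := by
  have hre : DifferentiableAt ℝ (fun w : ℂ ↦ g w.re) z := hg.comp z reCLM.differentiableAt
  simp only [mul_div_assoc (g _)]
  rw [dbar_mul hre (differentiableAt_I_mul_im_pow_div_factorial k z), dbar_comp_re hg,
    dbar_I_mul_im_pow_div_factorial]
  ring

end TaylorTerm

/-- The Taylor sum `∑_{k=0}^{N} f^{(k)}(x) (iy)^k / k!` at `w = x + iy`: the Taylor polynomial of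
order `N` of `f` at `x`, evaluated at the imaginary increment `iy`. Multiplied by a cutoff, it is
the almost-analytic extension of `f`. -/
noncomputable def imTaylorSum (N : ℕ) (f : ℝ → ℂ) (w : ℂ) : ℂ :=
  ∑ k ∈ range (N + 1), iteratedDeriv k f w.re * (I * w.im) ^ k / (k.factorial : ℂ)

section ImTaylorSum

variable {N : ℕ} {f : ℝ → ℂ} {χ : ℂ → ℂ} {z : ℂ}

lemma differentiableAt_imTaylorSum
    (hf : ∀ k ≤ N, DifferentiableAt ℝ (iteratedDeriv k f) z.re) :
    DifferentiableAt ℝ (imTaylorSum N f) z :=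
  DifferentiableAt.fun_sum fun k hk ↦
    differentiableAt_comp_re_mul_I_mul_im_pow_div_factorial k (hf k (mem_range_succ_iff.mp hk))

lemma dbar_imTaylorSum (hf : ∀ k ≤ N, DifferentiableAt ℝ (iteratedDeriv k f) z.re) :
    dbar (imTaylorSum N f) z =
      (1 / 2) * (iteratedDeriv (N + 1) f z.re * (I * z.im) ^ N / (N.factorial : ℂ)) := by
  -- `k / k!` stands for `1 / (k - 1)!`, so that `a 0 = 0`.
  let a (k : ℕ) : ℂ := iteratedDeriv k f z.re * (k * (I * z.im) ^ (k - 1) / (k.factorial : ℂ))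
  have a_succ (k : ℕ) :
      a (k + 1) = iteratedDeriv (k + 1) f z.re * ((I * z.im) ^ k / (k.factorial : ℂ)) := by
    have hk : ((k + 1 : ℕ) : ℂ) ≠ 0 := Nat.cast_ne_zero.mpr k.succ_ne_zero
    simp only [a, Nat.factorial_succ, Nat.cast_mul, Nat.add_sub_cancel, mul_div_mul_left _ _ hk]
  have dbar_term (k : ℕ) (hk : k ∈ range (N + 1)) :
      dbar (fun w ↦ iteratedDeriv k f w.re * (I * w.im) ^ k / (k.factorial : ℂ)) z =
        (1 / 2) * (a (k + 1) - a k) := by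
    rw [dbar_comp_re_mul_I_mul_im_pow_div_factorial k (hf k (mem_range_succ_iff.mp hk)),
      ← iteratedDeriv_succ, a_succ]
  calc dbar (imTaylorSum N f) z
      = ∑ k ∈ range (N + 1), (1 / 2) * (a (k + 1) - a k) :=
        (dbar_sum fun k hk ↦ differentiableAt_comp_re_mul_I_mul_im_pow_div_factorial k
          (hf k (mem_range_succ_iff.mp hk))).trans (sum_congr rfl dbar_term)
    _ = (1 / 2) * (a (N + 1) - a 0) := by rw [← mul_sum, sum_range_sub]
    _ = (1 / 2) * (iteratedDeriv (N + 1) f z.re * (I * z.im) ^ N / (N.factorial : ℂ)) := by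
        have a_zero : a 0 = 0 := by simp [a]
        rw [a_zero, sub_zero, a_succ, mul_div_assoc]

theorem stmt7_general (hf : ∀ k ≤ N, DifferentiableAt ℝ (iteratedDeriv k f) z.re)
    (hχ : DifferentiableAt ℝ χ z) :
    dbar (fun w ↦ imTaylorSum N f w * χ w) z =
      (1 / 2) * (iteratedDeriv (N + 1) f z.re * (I * z.im) ^ N / (N.factorial : ℂ)) * χ z +
        imTaylorSum N f z * dbar χ z := by
  rw [dbar_mul (differentiableAt_imTaylorSum hf) hχ, dbar_imTaylorSum hf]

end ImTaylorSum

/-- Let `N ∈ ℕ`, `f : ℝ → ℂ` of class `C^{N+1}`, `χ : ℝ² ≅ ℂ → ℂ`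
(real-)differentiable, and let
`f̃(x+iy) := (∑_{k=0}^{N} f^{(k)}(x)(iy)^k/k!) · χ(x,y)` be the almost-analytic extension.
Then at every `z = x + iy`,
`∂̄f̃(z) = ½ f^{(N+1)}(x)(iy)^N/N! · χ(x,y) + (∑_{k=0}^{N} f^{(k)}(x)(iy)^k/k!) ∂̄χ(x,y)`. -/
theorem stmt7 (N : ℕ) (f : ℝ → ℂ) (hf : ContDiff ℝ (N + 1 : ℕ) f)
    (χ : ℂ → ℂ) (hχ : Differentiable ℝ χ) (z : ℂ) :
    dbar (fun w : ℂ =>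
        (∑ k ∈ Finset.range (N + 1),
          iteratedDeriv k f w.re * (Complex.I * w.im) ^ k / (k.factorial : ℂ)) * χ w) z
      = (1 / 2) * (iteratedDeriv (N + 1) f z.re * (Complex.I * z.im) ^ N / (N.factorial : ℂ))
            * χ z
        + (∑ k ∈ Finset.range (N + 1),
            iteratedDeriv k f z.re * (Complex.I * z.im) ^ k / (k.factorial : ℂ)) * dbar χ z :=
  stmt7_general (fun k hk ↦ hf.differentiable_iteratedDeriv k
    (by exact_mod_cast Nat.lt_succ_of_le hk) z.re) (hχ z)
end

section
/- Let γ ∈ ℂ and let z ∈ ℂ with z ≠ 0 and z ≠ γ be such that H0 − z is boundedly invertible. Then H_γ − z = H0 + γΠ0 − z is boundedly invertible, and its inverse is given by (H_γ − z)^{-1} = (H0 − z)^{-1} + (1/z + 1/(γ − z)) Π0. -/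
/-!
If `A` is invertible and acts as the nonzero scalar `a` on the range of an idempotent `P`, then
`A + γ P = A (1 + (γ / a) P)`, and `1 + c P` is inverted inside the algebra spanned by `1` and `P`.
If moreover `P A = a P`, then `P A⁻¹ = a⁻¹ P`, so the perturbation only replaces the
eigenvalue `a⁻¹` of `A⁻¹` on the range of `P` by `(a + γ)⁻¹`. The resolvent formula is the case
`A = H - z`, `a = -z`.
-/

section IdempotentPerturbation

open Ring

theorem one_add_smul_mul_one_add_smul_of_isIdempotentElem {K R : Type*} [CommSemiring K]
    [Semiring R] [Algebra K R] {P : R} (hP : IsIdempotentElem P) (c d : K) :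
    (1 + c • P) * (1 + d • P) = 1 + (c + d + c * d) • P := by
  simp only [add_mul, mul_add, one_mul, mul_one, smul_mul_smul_comm, hP.eq]
  module

variable {K R : Type*} [Field K] [Ring R] [Algebra K R] {A P : R} {a c γ : K}

theorem one_add_smul_mul_one_sub_smul_of_isIdempotentElem (hP : IsIdempotentElem P)
    (hc : 1 + c ≠ 0) : (1 + c • P) * (1 - (c / (1 + c)) • P) = 1 := by
  have hcoeff : c + -(c / (1 + c)) + c * -(c / (1 + c)) = 0 := by field_simp; ring
  rw [sub_eq_add_neg, ← neg_smul, one_add_smul_mul_one_add_smul_of_isIdempotentElem hP, hcoeff,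
    zero_smul, add_zero]

theorem isUnit_one_add_smul_of_isIdempotentElem (hP : IsIdempotentElem P) (hc : 1 + c ≠ 0) :
    IsUnit (1 + c • P) := by
  have hcomm : Commute (1 + c • P) (1 - (c / (1 + c)) • P) :=
    (Commute.one_left _).add_left <| (Commute.one_right _).sub_right <|
      ((Commute.refl P).smul_left c).smul_right _
  have hmul := one_add_smul_mul_one_sub_smul_of_isIdempotentElem hP hc
  exact ⟨⟨_, _, hmul, hcomm.eq.symm.trans hmul⟩, rfl⟩

theorem inverse_one_add_smul_of_isIdempotentElem (hP : IsIdempotentElem P) (hc : 1 + c ≠ 0) :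
    inverse (1 + c • P) = 1 - (c / (1 + c)) • P := by
  rw [← mul_one (inverse _),
    inverse_mul_eq_iff_eq_mul _ _ _ (isUnit_one_add_smul_of_isIdempotentElem hP hc),
    one_add_smul_mul_one_sub_smul_of_isIdempotentElem hP hc]

theorem mul_inverse_eq_inv_smul (hA : IsUnit A) (ha : a ≠ 0) (hPA : P * A = a • P) :
    P * inverse A = a⁻¹ • P := by
  rw [eq_comm, eq_mul_inverse_iff_mul_eq _ _ _ hA, smul_mul_assoc, hPA, inv_smul_smul₀ ha]

theorem add_smul_eq_mul_one_add_smul (ha : a ≠ 0) (hAP : A * P = a • P) (γ : K) :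
    A + γ • P = A * (1 + (γ / a) • P) := by
  rw [mul_add, mul_one, mul_smul_comm, hAP, smul_smul, div_mul_cancel₀ _ ha]

theorem one_add_div_ne_zero (ha : a ≠ 0) (haγ : a + γ ≠ 0) : 1 + γ / a ≠ 0 := by
  rw [one_add_div ha]
  exact div_ne_zero haγ ha

theorem isUnit_add_smul_of_isIdempotentElem (hA : IsUnit A) (hP : IsIdempotentElem P)
    (hAP : A * P = a • P) (ha : a ≠ 0) (haγ : a + γ ≠ 0) : IsUnit (A + γ • P) := by
  rw [add_smul_eq_mul_one_add_smul ha hAP]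
  exact hA.mul (isUnit_one_add_smul_of_isIdempotentElem hP (one_add_div_ne_zero ha haγ))

theorem inverse_add_smul_of_isIdempotentElem (hA : IsUnit A) (hP : IsIdempotentElem P)
    (hAP : A * P = a • P) (hPA : P * A = a • P) (ha : a ≠ 0) (haγ : a + γ ≠ 0) :
    inverse (A + γ • P) = inverse A + ((a + γ)⁻¹ - a⁻¹) • P := by
  have hcoeff : -(γ / a / (1 + γ / a) * a⁻¹) = (a + γ)⁻¹ - a⁻¹ := by
    rw [one_add_div ha]; field_simp; ring
  calc inverse (A + γ • P)
      = (1 - (γ / a / (1 + γ / a)) • P) * inverse A := by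
        rw [add_smul_eq_mul_one_add_smul ha hAP, inverse_mul (.inl hA),
          inverse_one_add_smul_of_isIdempotentElem hP (one_add_div_ne_zero ha haγ)]
    _ = inverse A - (γ / a / (1 + γ / a) * a⁻¹) • P := by
        rw [sub_mul, one_mul, smul_mul_assoc, mul_inverse_eq_inv_smul hA ha hPA, smul_smul]
    _ = inverse A + ((a + γ)⁻¹ - a⁻¹) • P := by
        rw [sub_eq_add_neg, ← neg_smul, hcoeff]

theorem stmt8_general {H P : R} (hP : IsIdempotentElem P) (hHP : H * P = 0) (hPH : P * H = 0)
    {γ z : K} (hz0 : z ≠ 0) (hzγ : z ≠ γ) (hz : IsUnit (H - z • (1 : R))) :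
    IsUnit (H + γ • P - z • (1 : R)) ∧
    inverse (H + γ • P - z • (1 : R))
      = inverse (H - z • (1 : R)) + (1 / z + 1 / (γ - z)) • P := by
  have hAP : (H - z • (1 : R)) * P = (-z) • P := by
    rw [sub_mul, hHP, smul_one_mul, zero_sub, neg_smul]
  have hPA : P * (H - z • (1 : R)) = (-z) • P := by
    rw [mul_sub, hPH, mul_smul_one, zero_sub, neg_smul]
  have ha : -z ≠ 0 := neg_ne_zero.mpr hz0
  have haγ : -z + γ ≠ 0 := by rwa [neg_add_eq_sub, sub_ne_zero, ne_comm]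
  have hcoeff : 1 / z + 1 / (γ - z) = (-z + γ)⁻¹ - (-z)⁻¹ := by
    rw [inv_neg, neg_add_eq_sub, one_div, one_div]; ring
  rw [add_sub_right_comm, hcoeff]
  exact ⟨isUnit_add_smul_of_isIdempotentElem hz hP hAP ha haγ,
    inverse_add_smul_of_isIdempotentElem hz hP hAP hPA ha haγ⟩

end IdempotentPerturbation

section RankOne

open InnerProductSpace

variable {𝕜 E : Type*} [RCLike 𝕜]

theorem mul_rankOne_eq_zero [SeminormedAddCommGroup E] [InnerProductSpace 𝕜 E] {T : E →L[𝕜] E}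
    {x : E} (hx : T x = 0) (y : E) : T * rankOne 𝕜 x y = 0 := by
  rw [ContinuousLinearMap.mul_def, comp_rankOne, hx, map_zero, zero_apply]

theorem rankOne_mul_eq_zero_of_isSelfAdjoint [NormedAddCommGroup E] [InnerProductSpace 𝕜 E]
    [CompleteSpace E] {T : E →L[𝕜] E} (hT : IsSelfAdjoint T) {x : E} (hx : T x = 0) (y : E) :
    rankOne 𝕜 y x * T = 0 := by
  rw [ContinuousLinearMap.mul_def, rankOne_comp, hT.adjoint_eq, hx, map_zero]

end RankOne

/-- Let `𝓗` be a complex Hilbert space, `H0` a bounded self-adjoint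
operator, `u0` a unit vector with `H0 u0 = 0`, `Π0 v := ⟨v, u0⟩ u0` the rank-one
orthogonal projection onto `u0`, and `H_γ := H0 + γ Π0`. If `z ≠ 0`, `z ≠ γ` and
`H0 - z` is boundedly invertible, then `H_γ - z` is boundedly invertible and
`(H_γ - z)⁻¹ = (H0 - z)⁻¹ + (1/z + 1/(γ - z)) Π0`. -/
theorem stmt8 {𝓗 : Type*} [NormedAddCommGroup 𝓗] [InnerProductSpace ℂ 𝓗] [CompleteSpace 𝓗]
    (H0 : 𝓗 →L[ℂ] 𝓗) (hsa : IsSelfAdjoint H0) (u0 : 𝓗) (hu0 : ‖u0‖ = 1)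
    (hker : H0 u0 = 0) (γ z : ℂ) (hz0 : z ≠ 0) (hzγ : z ≠ γ)
    (hz : IsUnit (H0 - z • (1 : 𝓗 →L[ℂ] 𝓗))) :
    IsUnit (H0 + γ • ((innerSL ℂ u0).smulRight u0) - z • (1 : 𝓗 →L[ℂ] 𝓗)) ∧
    Ring.inverse (H0 + γ • ((innerSL ℂ u0).smulRight u0) - z • (1 : 𝓗 →L[ℂ] 𝓗))
      = Ring.inverse (H0 - z • (1 : 𝓗 →L[ℂ] 𝓗))
        + (1 / z + 1 / (γ - z)) • ((innerSL ℂ u0).smulRight u0) :=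
  stmt8_general (InnerProductSpace.isIdempotentElem_rankOne_self hu0)
    (mul_rankOne_eq_zero hker u0) (rankOne_mul_eq_zero_of_isSelfAdjoint hsa hker u0) hz0 hzγ hz
end

section
/- Let β > 0. There exists z ∈ ℂ with Im z ≠ 0 such that D(z) = 0, i.e. 1 + iβ ∫_0^1 (t − z)^{-1} dt = 0, if and only if β > 1/π. Moreover, when β > 1/π there is exactly one such point, namely z_β = ½ + (i/2) · cos(1/(2β))/sin(1/(2β)), and it satisfies Im z_β > 0. -/
/-- The toy-model perturbation determinant `D(z) := 1 + iβ ∫_0^1 (t - z)⁻¹ dt`. -/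
noncomputable def Dtoy (β : ℝ) (z : ℂ) : ℂ :=
  1 + Complex.I * (β : ℂ) * ∫ t in (0 : ℝ)..1, ((t : ℂ) - z)⁻¹

/-! For non-real `z` the integral is `log (1 - z) - log (-z)`. Both logarithms are taken in the same
open half-plane, so the imaginary part of their difference lies in `(-π, π)`, a strip on which `exp`
is injective. The equation `D(z) = 0` says that this difference equals `i/β`; it is therefore
equivalent to `1/|β| < π` together with the exponentiated equation `exp (i/β) (-z) = 1 - z`,
which is linear in `z`. -/

section

open Complex

theorem abs_arg_sub_arg_lt_pi {w₁ w₂ : ℂ} (h : 0 < w₁.im * w₂.im) :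
    |w₁.arg - w₂.arg| < Real.pi := by
  rw [abs_lt]
  rcases pos_and_pos_or_neg_and_neg_of_mul_pos h with ⟨h₁, h₂⟩ | ⟨h₁, h₂⟩
  · have arg₁_nonneg := arg_nonneg_iff.2 h₁.le
    have arg₂_nonneg := arg_nonneg_iff.2 h₂.le
    have arg₁_lt := arg_lt_pi_iff.2 (.inr h₁.ne')
    have arg₂_lt := arg_lt_pi_iff.2 (.inr h₂.ne')
    constructor <;> linarith
  · have arg₁_neg := arg_neg_iff.2 h₁
    have arg₂_neg := arg_neg_iff.2 h₂
    have lt_arg₁ := neg_pi_lt_arg w₁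
    have lt_arg₂ := neg_pi_lt_arg w₂
    constructor <;> linarith

theorem log_sub_log_eq_iff {w₁ w₂ ζ : ℂ} (h : 0 < w₁.im * w₂.im) :
    log w₁ - log w₂ = ζ ↔ |ζ.im| < Real.pi ∧ exp ζ * w₂ = w₁ := by
  have hw₁ : w₁ ≠ 0 := by rintro rfl; simp at h
  have hw₂ : w₂ ≠ 0 := by rintro rfl; simp at h
  have exp_diff : exp (log w₁ - log w₂) = w₁ / w₂ := by
    rw [exp_sub, exp_log hw₁, exp_log hw₂]
  have im_diff : |(log w₁ - log w₂).im| < Real.pi := by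
    simpa only [sub_im, log_im] using abs_arg_sub_arg_lt_pi h
  constructor
  · rintro rfl
    exact ⟨im_diff, by rw [exp_diff, div_mul_cancel₀ _ hw₂]⟩
  · rintro ⟨hζ, hexp⟩
    refine exp_inj_of_neg_pi_lt_of_le_pi (abs_lt.1 im_diff).1 (abs_lt.1 im_diff).2.le
      (abs_lt.1 hζ).1 (abs_lt.1 hζ).2.le ?_
    rw [exp_diff, ← hexp, mul_div_cancel_right₀ _ hw₂]

theorem integral_inv_ofReal_sub {z : ℂ} (hz : z.im ≠ 0) (a b : ℝ) :
    ∫ t in a..b, ((t : ℂ) - z)⁻¹ = log (b - z) - log (a - z) := by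
  have mem_slitPlane (t : ℝ) : (t : ℂ) - z ∈ slitPlane := .inr (by simpa using hz)
  have hasDerivAt_log (t : ℝ) : HasDerivAt (fun t : ℝ ↦ log (t - z)) ((t : ℂ) - z)⁻¹ t := by
    simpa only [ofRealCLM_apply, ofReal_one, one_div] using
      (ofRealCLM.hasDerivAt.sub_const z).clog_real (mem_slitPlane t)
  have continuous_inv : Continuous fun t : ℝ ↦ ((t : ℂ) - z)⁻¹ :=
    Continuous.inv₀ (by fun_prop) fun t ↦ slitPlane_ne_zero (mem_slitPlane t)
  exact intervalIntegral.integral_eq_sub_of_hasDerivAt (fun t _ ↦ hasDerivAt_log t)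
    (continuous_inv.intervalIntegrable a b)

theorem integral_inv_ofReal_sub_eq_iff {z : ℂ} (hz : z.im ≠ 0) (a b : ℝ) (ζ : ℂ) :
    ∫ t in a..b, ((t : ℂ) - z)⁻¹ = ζ ↔ |ζ.im| < Real.pi ∧ exp ζ * (a - z) = b - z := by
  rw [integral_inv_ofReal_sub hz, log_sub_log_eq_iff]
  simpa using mul_self_pos.2 hz

theorem exp_two_mul_I_mul_eq_one_iff {θ : ℂ} : exp (2 * I * θ) = 1 ↔ sin θ = 0 := by
  rw [exp_eq_one_iff, sin_eq_zero_iff]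
  refine exists_congr fun n ↦ ?_
  rw [show (n : ℂ) * (2 * Real.pi * I) = 2 * I * (n * Real.pi) by ring,
    mul_right_inj' (mul_ne_zero two_ne_zero I_ne_zero)]

theorem mul_one_sub_exp_eq_one_iff {θ : ℂ} (hθ : sin θ ≠ 0) (z : ℂ) :
    z * (1 - exp (2 * I * θ)) = 1 ↔ z = 1 / 2 + I / 2 * cot θ := by
  have one_sub_ne : 1 - exp (2 * I * θ) ≠ 0 :=
    sub_ne_zero.2 fun h ↦ hθ (exp_two_mul_I_mul_eq_one_iff.1 h.symm)
  have inv_eq : 1 / (1 - exp (2 * I * θ)) = 1 / 2 + I / 2 * cot θ := by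
    rw [cot_eq_exp_ratio]
    field_simp
    ring
  rw [← inv_eq, eq_div_iff one_sub_ne]

theorem mul_cot_pos {θ : ℝ} (h₀ : θ ≠ 0) (hθ : |θ| < Real.pi / 2) : 0 < θ * Real.cot θ := by
  wlog hpos : 0 < θ generalizing θ
  · have := this (neg_ne_zero.2 h₀) (by rwa [abs_neg])
      (neg_pos.2 (lt_of_le_of_ne (not_lt.1 hpos) h₀))
    simpa [Real.cot_eq_cos_div_sin, div_neg] using this
  · obtain ⟨h_neg, h_lt⟩ := abs_lt.1 hθ
    rw [Real.cot_eq_cos_div_sin]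
    have cos_pos := Real.cos_pos_of_mem_Ioo ⟨h_neg, h_lt⟩
    have sin_pos := Real.sin_pos_of_pos_of_lt_pi hpos (by linarith)
    positivity

/-- The point `z_β = ½ + (i/2) cot (1/(2β))`, the candidate for the non-real zero of `D`. -/
noncomputable def toyZero (β : ℝ) : ℂ :=
  1 / 2 + I / 2 * (Real.cot (1 / (2 * β)) : ℝ)

theorem toyZero_im (β : ℝ) : (toyZero β).im = Real.cot (1 / (2 * β)) / 2 := by
  simp [toyZero, div_mul_eq_mul_div, -ofReal_cot]

theorem ne_zero_of_one_div_pi_lt_abs {β : ℝ} (hβ : 1 / Real.pi < |β|) : β ≠ 0 :=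
  abs_pos.1 ((one_div_pos.2 Real.pi_pos).trans hβ)

theorem abs_one_div_two_mul_lt {β : ℝ} (hβ : 1 / Real.pi < |β|) :
    |1 / (2 * β)| < Real.pi / 2 := by
  have := (one_div_lt Real.pi_pos (abs_pos.2 (ne_zero_of_one_div_pi_lt_abs hβ))).1 hβ
  rw [abs_div, abs_mul, abs_one, abs_two, mul_comm, ← div_div]
  linarith

theorem mul_toyZero_im_pos {β : ℝ} (hβ : 1 / Real.pi < |β|) : 0 < β * (toyZero β).im := by
  have hβ₀ := ne_zero_of_one_div_pi_lt_abs hβ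
  have cot_pos := mul_cot_pos (by positivity) (abs_one_div_two_mul_lt hβ)
  have : β * (toyZero β).im = β ^ 2 * (1 / (2 * β) * Real.cot (1 / (2 * β))) := by
    rw [toyZero_im]
    field_simp
  rw [this]
  positivity

theorem Dtoy_eq_zero_iff_integral_eq {β : ℝ} (hβ : β ≠ 0) (z : ℂ) :
    Dtoy β z = 0 ↔ ∫ t in (0 : ℝ)..1, ((t : ℂ) - z)⁻¹ = I / β := by
  have hβ' : (β : ℂ) ≠ 0 := ofReal_ne_zero.2 hβ
  rw [Dtoy, eq_div_iff hβ']
  constructor <;> intro h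
  · linear_combination (-I) * h + β * (∫ t in (0 : ℝ)..1, ((t : ℂ) - z)⁻¹) * I_sq
  · linear_combination I * h + I_sq

theorem Dtoy_eq_zero_iff (β : ℝ) {z : ℂ} (hz : z.im ≠ 0) :
    Dtoy β z = 0 ↔ 1 / Real.pi < |β| ∧ z * (1 - exp (I / β)) = 1 := by
  rcases eq_or_ne β 0 with rfl | hβ
  · simp [Dtoy]
  have im_eq : (I / β).im = 1 / β := by simp [div_ofReal_im]
  rw [Dtoy_eq_zero_iff_integral_eq hβ, integral_inv_ofReal_sub_eq_iff hz, im_eq, abs_one_div,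
    one_div_lt (abs_pos.2 hβ) Real.pi_pos, ofReal_zero, ofReal_one]
  refine and_congr_right fun _ ↦ ?_
  constructor <;> intro h <;> linear_combination h

theorem mul_one_sub_exp_I_div_eq_one_iff {β : ℝ} (hβ : 1 / Real.pi < |β|) (z : ℂ) :
    z * (1 - exp (I / β)) = 1 ↔ z = toyZero β := by
  have hβ₀ := ne_zero_of_one_div_pi_lt_abs hβ
  have exponent_eq : I / β = 2 * I * (1 / (2 * β) : ℝ) := by
    push_cast
    field_simp
  have sin_ne_zero : sin (1 / (2 * β) : ℝ) ≠ 0 := by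
    obtain ⟨h_gt, h_lt⟩ := abs_lt.1 (abs_one_div_two_mul_lt hβ)
    rw [← ofReal_sin, ofReal_ne_zero, Ne,
      Real.sin_eq_zero_iff_of_lt_of_lt (by linarith) (by linarith)]
    positivity
  rw [exponent_eq, mul_one_sub_exp_eq_one_iff sin_ne_zero, toyZero, ofReal_cot]

theorem im_ne_zero_and_Dtoy_eq_zero_iff (β : ℝ) (z : ℂ) :
    (z.im ≠ 0 ∧ Dtoy β z = 0) ↔ 1 / Real.pi < |β| ∧ z = toyZero β := by
  constructor
  · rintro ⟨hz, hD⟩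
    obtain ⟨hβ, hmul⟩ := (Dtoy_eq_zero_iff β hz).1 hD
    exact ⟨hβ, (mul_one_sub_exp_I_div_eq_one_iff hβ z).1 hmul⟩
  · rintro ⟨hβ, rfl⟩
    have him : (toyZero β).im ≠ 0 := right_ne_zero_of_mul (mul_toyZero_im_pos hβ).ne'
    exact ⟨him, (Dtoy_eq_zero_iff β him).2
      ⟨hβ, (mul_one_sub_exp_I_div_eq_one_iff hβ _).2 rfl⟩⟩

theorem stmt11_general (β : ℝ) :
    ((∃ z : ℂ, z.im ≠ 0 ∧ Dtoy β z = 0) ↔ 1 / Real.pi < |β|) ∧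
    (1 / Real.pi < |β| →
      (∀ z : ℂ, (z.im ≠ 0 ∧ Dtoy β z = 0) ↔ z = toyZero β) ∧ 0 < β * (toyZero β).im) := by
  simp only [im_ne_zero_and_Dtoy_eq_zero_iff]
  exact ⟨⟨fun ⟨_, hβ, _⟩ ↦ hβ, fun hβ ↦ ⟨_, hβ, rfl⟩⟩,
    fun hβ ↦ ⟨fun _ ↦ and_iff_right hβ, mul_toyZero_im_pos hβ⟩⟩

end

/-- Let `β > 0`. There is `z ∈ ℂ` with `Im z ≠ 0` and `D(z) = 0` iff
`β > 1/π`; moreover, when `β > 1/π` there is exactly one such point, namely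
`z_β = ½ + (i/2) · cos(1/(2β))/sin(1/(2β))`, and it satisfies `Im z_β > 0`. -/
theorem stmt11 (β : ℝ) (hβ : 0 < β) :
    ((∃ z : ℂ, z.im ≠ 0 ∧ Dtoy β z = 0) ↔ 1 / Real.pi < β) ∧
    (1 / Real.pi < β →
      (∀ z : ℂ, (z.im ≠ 0 ∧ Dtoy β z = 0) ↔
        z = 1 / 2 + (Complex.I / 2) *
          ((Real.cos (1 / (2 * β)) / Real.sin (1 / (2 * β)) : ℝ) : ℂ)) ∧
      0 < (1 / 2 + (Complex.I / 2) *
          ((Real.cos (1 / (2 * β)) / Real.sin (1 / (2 * β)) : ℝ) : ℂ)).im) := by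
  simpa only [toyZero, Real.cot_eq_cos_div_sin, abs_of_pos hβ, mul_pos_iff_of_pos_left hβ]
    using stmt11_general β
end

section
/- Let V : ℝ³ → ℂ be measurable and short-range with exponent δ > 3. Then the map w ↦ K_w is continuous from the closed upper half-plane {w ∈ ℂ : Im w ≥ 0} into L²(ℝ³ × ℝ³); in particular, for every λ > 0 and every sequence ε_n → 0⁺, the kernels K_{w_n} with w_n → ±√λ, Im w_n ≥ 0, converge in L²(ℝ³ × ℝ³) to K_{±√λ}. -/
open MeasureTheory Filter Topology

/-- Three-dimensional Euclidean space `ℝ³`. -/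
abbrev E3 : Type := EuclideanSpace ℝ (Fin 3)

/-- The Japanese bracket `⟨x⟩ := (1 + |x|²)^{1/2}`. -/
noncomputable def jap (x : E3) : ℝ := Real.sqrt (1 + ‖x‖ ^ 2)

/-- The weighted free-resolvent kernel
`K_w(x,y) := (4π)⁻¹ ⟨x⟩^{-δ/2} e^{iw|x-y|} |x-y|⁻¹ ⟨y⟩^{δ/2} V(y)`. -/
noncomputable def Kker (δ : ℝ) (V : E3 → ℂ) (w : ℂ) (p : E3 × E3) : ℂ :=
  (((4 * Real.pi)⁻¹ : ℝ) : ℂ) * ((jap p.1 ^ (-δ / 2) : ℝ) : ℂ)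
    * Complex.exp (Complex.I * w * (‖p.1 - p.2‖ : ℂ)) * ((‖p.1 - p.2‖⁻¹ : ℝ) : ℂ)
    * ((jap p.2 ^ (δ / 2) : ℝ) : ℂ) * V p.2

/-!
On the closed upper half-plane `|exp (i w |x - y|)| ≤ 1`, so every kernel `K_w` is dominated by
`M / (4π)` times `⟨x⟩ ^ (-δ/2) ⟨y⟩ ^ (-δ/2) |x - y|⁻¹`. The square of this function is integrable:
where `|x - y| ≥ 1` it is at most `⟨x⟩ ^ (-δ) ⟨y⟩ ^ (-δ)`, which is integrable because `δ > 3`, and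
where `|x - y| < 1` it is at most `⟨y⟩ ^ (-δ) |x - y|⁻²`, whose singularity is integrable because
`2 < 3`. Since `w ↦ K_w(x, y)` is continuous, dominated convergence in `L²` applies.
-/

open Module (finrank)
open scoped ENNReal

theorem tendsto_eLpNorm_zero_of_dominated {α ι F : Type*} [MeasurableSpace α] {μ : Measure α}
    [NormedAddCommGroup F] {p : ℝ≥0∞} (hp : p ≠ ∞) {l : Filter ι} [l.IsCountablyGenerated]
    {f : ι → α → F} {bound : α → ℝ} (hf : ∀ᶠ i in l, AEStronglyMeasurable (f i) μ)
    (hbound : MemLp bound p μ) (hle : ∀ᶠ i in l, ∀ᵐ a ∂μ, ‖f i a‖ ≤ bound a)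
    (hlim : ∀ᵐ a ∂μ, Tendsto (f · a) l (𝓝 0)) :
    Tendsto (fun i ↦ eLpNorm (f i) p μ) l (𝓝 0) := by
  rcases eq_or_ne p 0 with rfl | hp₀
  · simpa only [eLpNorm_exponent_zero] using tendsto_const_nhds
  have hq : 0 < p.toReal := ENNReal.toReal_pos hp₀ hp
  have hpow : Tendsto (fun i ↦ ∫⁻ a, ‖f i a‖ₑ ^ p.toReal ∂μ) l (𝓝 (∫⁻ _, 0 ∂μ)) := by
    refine tendsto_lintegral_filter_of_dominated_convergence' (fun a ↦ ‖bound a‖ₑ ^ p.toReal)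
      (hf.mono fun i hi ↦ hi.enorm.pow_const _) ?_
      (lintegral_rpow_enorm_lt_top_of_eLpNorm_lt_top hp₀ hp hbound.eLpNorm_lt_top).ne ?_
    · filter_upwards [hle] with i hi
      filter_upwards [hi] with a ha
      gcongr
      exact enorm_le_iff_norm_le.mpr (ha.trans (Real.le_norm_self _))
    · filter_upwards [hlim] with a ha
      simpa [hq] using ha.enorm.ennrpow_const p.toReal
  simpa [eLpNorm_eq_lintegral_rpow_enorm_toReal hp₀ hp, hq] using
    hpow.ennrpow_const (1 / p.toReal)

section WeaklySingular

variable {E : Type*} [NormedAddCommGroup E]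

theorem norm_rpow_neg_le_one_add_indicator_ball {α : ℝ} (hα : 0 ≤ α) (z : E) :
    ‖z‖ ^ (-α) ≤ 1 + (Metric.ball (0 : E) 1).indicator (fun z ↦ ‖z‖ ^ (-α)) z := by
  by_cases hz : z ∈ Metric.ball (0 : E) 1
  · simp [Set.indicator_of_mem hz]
  · have hz' : 1 ≤ ‖z‖ := by simpa using hz
    simpa [Set.indicator_of_notMem hz] using
      Real.rpow_le_one_of_one_le_of_nonpos hz' (neg_nonpos.mpr hα)

variable [NormedSpace ℝ E] [FiniteDimensional ℝ E] [MeasurableSpace E] [BorelSpace E]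
  {μ : Measure E} [μ.IsAddHaarMeasure]

theorem integrable_indicator_ball_norm_rpow_neg {α : ℝ} (r : ℝ) (hd : 1 ≤ finrank ℝ E)
    (hα : α < finrank ℝ E) :
    Integrable ((Metric.ball (0 : E) r).indicator fun z ↦ ‖z‖ ^ (-α)) μ := by
  have hmeas : Measurable fun z : E ↦ ‖z‖ ^ (-α) := by fun_prop
  refine (integrableOn_ball_of_norm_le_rpow hd (C := 1) hα (ae_of_all _ fun z ↦ ?_)
    hmeas.aestronglyMeasurable).integrable_indicator measurableSet_ball
  rw [one_mul, Real.norm_of_nonneg (by positivity)]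

theorem integrable_mul_mul_norm_sub_rpow_neg {f g : E → ℝ} {C α : ℝ} (hf : Integrable f μ)
    (hfC : ∀ᵐ x ∂μ, ‖f x‖ ≤ C) (hg : Integrable g μ) (hα₀ : 0 ≤ α) (hα : α < finrank ℝ E) :
    Integrable (fun p : E × E ↦ f p.1 * g p.2 * ‖p.1 - p.2‖ ^ (-α)) (μ.prod μ) := by
  have hd : 1 ≤ finrank ℝ E := by exact_mod_cast hα₀.trans_lt hα
  set k : E → ℝ := (Metric.ball (0 : E) 1).indicator fun z ↦ ‖z‖ ^ (-α)
  have hk₀ (z : E) : 0 ≤ k z := Set.indicator_nonneg (fun z _ ↦ by positivity) z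
  have h_far : Integrable (fun p : E × E ↦ ‖f p.1‖ * ‖g p.2‖) (μ.prod μ) :=
    hf.norm.mul_prod hg.norm
  have h_near : Integrable (fun p : E × E ↦ ‖g p.2‖ * k (p.1 - p.2)) (μ.prod μ) :=
    hg.norm.convolution_integrand (ContinuousLinearMap.mul ℝ ℝ)
      (integrable_indicator_ball_norm_rpow_neg 1 hd hα)
  have hmeas : Measurable fun p : E × E ↦ ‖p.1 - p.2‖ ^ (-α) := by fun_prop
  refine (h_far.add (h_near.const_mul C)).mono'
    ((hf.mul_prod hg).aestronglyMeasurable.mul hmeas.aestronglyMeasurable) ?_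
  filter_upwards [Measure.quasiMeasurePreserving_fst.ae hfC] with p hp
  calc ‖f p.1 * g p.2 * ‖p.1 - p.2‖ ^ (-α)‖
      = ‖f p.1‖ * ‖g p.2‖ * ‖p.1 - p.2‖ ^ (-α) := by
        rw [norm_mul, norm_mul, Real.norm_of_nonneg (by positivity : 0 ≤ ‖p.1 - p.2‖ ^ (-α))]
    _ ≤ ‖f p.1‖ * ‖g p.2‖ * (1 + k (p.1 - p.2)) := by
        gcongr
        exact norm_rpow_neg_le_one_add_indicator_ball hα₀ _
    _ = ‖f p.1‖ * ‖g p.2‖ + ‖f p.1‖ * (‖g p.2‖ * k (p.1 - p.2)) := by ring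
    _ ≤ ‖f p.1‖ * ‖g p.2‖ + C * (‖g p.2‖ * k (p.1 - p.2)) := by
        gcongr
        exact mul_nonneg (norm_nonneg _) (hk₀ _)

end WeaklySingular

section JapaneseBracket

theorem one_le_jap (x : E3) : 1 ≤ jap x :=
  Real.one_le_sqrt.mpr (le_add_of_nonneg_right (sq_nonneg _))

theorem jap_pos (x : E3) : 0 < jap x :=
  one_pos.trans_le (one_le_jap x)

@[fun_prop]
theorem measurable_jap : Measurable jap := by
  unfold jap
  fun_prop

theorem jap_rpow_half_sq (r : ℝ) (x : E3) : (jap x ^ (r / 2)) ^ 2 = jap x ^ r := by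
  rw [← Real.rpow_mul_natCast (jap_pos x).le]
  norm_num

theorem integrable_jap_rpow_neg {δ : ℝ} (hδ : 3 < δ) : Integrable fun x : E3 ↦ jap x ^ (-δ) := by
  refine (integrable_rpow_neg_one_add_norm_sq (E := E3) (μ := volume) (r := δ)
    (by simpa using hδ)).congr (ae_of_all _ fun x ↦ ?_)
  simp only [jap]
  rw [Real.sqrt_eq_rpow, ← Real.rpow_mul (by positivity)]
  ring_nf

end JapaneseBracket

section Kernel

variable {δ : ℝ} {V : E3 → ℂ} {M : ℝ}

/-- The function `⟨x⟩ ^ (-δ/2) ⟨y⟩ ^ (-δ/2) |x - y|⁻¹`, which dominates every kernel `K_w` with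
`0 ≤ Im w` up to the constant `M / (4π)`. -/
noncomputable def kerMajorant (δ : ℝ) (p : E3 × E3) : ℝ :=
  jap p.1 ^ (-δ / 2) * jap p.2 ^ (-δ / 2) * ‖p.1 - p.2‖⁻¹

theorem memLp_two_kerMajorant (hδ : 3 < δ) : MemLp (kerMajorant δ) 2 := by
  have hmeas : Measurable (kerMajorant δ) := by
    unfold kerMajorant
    fun_prop
  have hle_one (x : E3) : ‖jap x ^ (-δ)‖ ≤ 1 := by
    rw [Real.norm_of_nonneg (Real.rpow_nonneg (jap_pos x).le _)]
    exact Real.rpow_le_one_of_one_le_of_nonpos (one_le_jap x) (by linarith)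
  have hsq (p : E3 × E3) :
      kerMajorant δ p ^ 2 = jap p.1 ^ (-δ) * jap p.2 ^ (-δ) * ‖p.1 - p.2‖ ^ (-2 : ℝ) := by
    rw [kerMajorant, mul_pow, mul_pow, jap_rpow_half_sq, jap_rpow_half_sq, inv_pow,
      Real.rpow_neg (norm_nonneg _), Real.rpow_two]
  rw [memLp_two_iff_integrable_sq hmeas.aestronglyMeasurable]
  simp only [hsq]
  exact integrable_mul_mul_norm_sub_rpow_neg (integrable_jap_rpow_neg hδ) (ae_of_all _ hle_one)
    (integrable_jap_rpow_neg hδ) zero_le_two (by norm_num)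

theorem norm_cexp_I_mul_mul_le_one {w : ℂ} (hw : 0 ≤ w.im) {r : ℝ} (hr : 0 ≤ r) :
    ‖Complex.exp (Complex.I * w * r)‖ ≤ 1 := by
  rw [Complex.norm_exp, Real.exp_le_one_iff]
  simpa using mul_nonneg hw hr

theorem jap_rpow_half_mul_norm_le {x : E3} (hV : ‖V x‖ ≤ M * jap x ^ (-δ)) :
    jap x ^ (δ / 2) * ‖V x‖ ≤ M * jap x ^ (-δ / 2) := by
  have hx := jap_pos x
  calc jap x ^ (δ / 2) * ‖V x‖ ≤ jap x ^ (δ / 2) * (M * jap x ^ (-δ)) := by gcongr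
    _ = M * jap x ^ (δ / 2 + -δ) := by rw [Real.rpow_add hx]; ring
    _ = M * jap x ^ (-δ / 2) := by ring_nf

theorem norm_Kker_eq (δ : ℝ) (V : E3 → ℂ) (w : ℂ) (p : E3 × E3) :
    ‖Kker δ V w p‖ = (4 * Real.pi)⁻¹ * jap p.1 ^ (-δ / 2) * ‖p.1 - p.2‖⁻¹
      * ‖Complex.exp (Complex.I * w * (‖p.1 - p.2‖ : ℂ))‖ * (jap p.2 ^ (δ / 2) * ‖V p.2‖) := by
  have h₁ : 0 ≤ jap p.1 ^ (-δ / 2) := Real.rpow_nonneg (jap_pos _).le _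
  have h₂ : 0 ≤ jap p.2 ^ (δ / 2) := Real.rpow_nonneg (jap_pos _).le _
  have hπ : 0 ≤ (4 * Real.pi)⁻¹ := by positivity
  simp only [Kker, norm_mul, Complex.norm_of_nonneg h₁, Complex.norm_of_nonneg h₂,
    Complex.norm_of_nonneg hπ, Complex.norm_of_nonneg (inv_nonneg.mpr (norm_nonneg (p.1 - p.2)))]
  ring

theorem norm_Kker_le (hbound : ∀ x, ‖V x‖ ≤ M * jap x ^ (-δ)) {w : ℂ} (hw : 0 ≤ w.im)
    (p : E3 × E3) : ‖Kker δ V w p‖ ≤ M / (4 * Real.pi) * kerMajorant δ p := by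
  have hx : 0 < jap p.1 := jap_pos p.1
  have hy : 0 < jap p.2 := jap_pos p.2
  calc ‖Kker δ V w p‖
      ≤ (4 * Real.pi)⁻¹ * jap p.1 ^ (-δ / 2) * ‖p.1 - p.2‖⁻¹ * 1
          * (jap p.2 ^ (δ / 2) * ‖V p.2‖) := by
        rw [norm_Kker_eq]
        gcongr
        exact norm_cexp_I_mul_mul_le_one hw (norm_nonneg _)
    _ ≤ (4 * Real.pi)⁻¹ * jap p.1 ^ (-δ / 2) * ‖p.1 - p.2‖⁻¹ * 1
          * (M * jap p.2 ^ (-δ / 2)) := by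
        exact mul_le_mul_of_nonneg_left (jap_rpow_half_mul_norm_le (hbound p.2)) (by positivity)
    _ = M / (4 * Real.pi) * kerMajorant δ p := by
        rw [kerMajorant]
        ring

theorem measurable_Kker (δ : ℝ) (hV : Measurable V) (w : ℂ) : Measurable (Kker δ V w) := by
  unfold Kker
  fun_prop

theorem continuous_Kker_left (δ : ℝ) (V : E3 → ℂ) (p : E3 × E3) :
    Continuous fun w ↦ Kker δ V w p := by
  unfold Kker
  fun_prop

theorem tendsto_eLpNorm_Kker_sub (hδ : 3 < δ) (hV : Measurable V)
    (hbound : ∀ x, ‖V x‖ ≤ M * jap x ^ (-δ)) {w₀ : ℂ} (hw₀ : 0 ≤ w₀.im) :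
    Tendsto (fun w ↦ eLpNorm (fun p ↦ Kker δ V w p - Kker δ V w₀ p) 2 volume)
      (𝓝[{w : ℂ | 0 ≤ w.im}] w₀) (𝓝 0) := by
  have hmajorant : MemLp (fun p ↦ 2 * (M / (4 * Real.pi) * kerMajorant δ p)) 2 :=
    ((memLp_two_kerMajorant hδ).const_mul _).const_mul _
  refine tendsto_eLpNorm_zero_of_dominated ENNReal.ofNat_ne_top (.of_forall fun w ↦ ?_)
    hmajorant ?_ (ae_of_all _ fun p ↦ ?_)
  · exact ((measurable_Kker δ hV w).sub (measurable_Kker δ hV w₀)).aestronglyMeasurable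
  · filter_upwards [self_mem_nhdsWithin] with w hw
    refine ae_of_all _ fun p ↦ (norm_sub_le _ _).trans ?_
    linarith [norm_Kker_le hbound hw p, norm_Kker_le hbound hw₀ p]
  · exact tendsto_sub_nhds_zero_iff.mpr
      ((continuous_Kker_left δ V p).tendsto w₀ |>.mono_left nhdsWithin_le_nhds)

end Kernel

/-- Let `V : ℝ³ → ℂ` be measurable and short-range with exponent
`δ > 3`. Then `w ↦ K_w` is continuous from the closed upper half-plane into
`L²(ℝ³ × ℝ³)`; in particular, for every `λ > 0` and every sequence `w_n → ±√λ` with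
`Im w_n ≥ 0`, the kernels `K_{w_n}` converge to `K_{±√λ}` in `L²(ℝ³ × ℝ³)`. -/
theorem stmt13 (δ : ℝ) (hδ : 3 < δ) (V : E3 → ℂ) (hV : Measurable V)
    (M : ℝ) (hM : 0 < M) (hbound : ∀ x : E3, ‖V x‖ ≤ M * jap x ^ (-δ)) :
    (∀ w₀ : ℂ, 0 ≤ w₀.im →
      Tendsto (fun w : ℂ =>
          eLpNorm (fun p : E3 × E3 => Kker δ V w p - Kker δ V w₀ p) 2
            (volume : Measure (E3 × E3)))
        (𝓝[{w : ℂ | 0 ≤ w.im}] w₀) (𝓝 0)) ∧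
    (∀ lam : ℝ, 0 < lam → ∀ s : ℝ, (s = Real.sqrt lam ∨ s = -Real.sqrt lam) →
      ∀ wn : ℕ → ℂ, (∀ n, 0 ≤ (wn n).im) → Tendsto wn atTop (𝓝 (s : ℂ)) →
        Tendsto (fun n : ℕ =>
            eLpNorm (fun p : E3 × E3 => Kker δ V (wn n) p - Kker δ V (s : ℂ) p) 2
              (volume : Measure (E3 × E3)))
          atTop (𝓝 0)) := by
  refine ⟨fun w₀ hw₀ ↦ tendsto_eLpNorm_Kker_sub hδ hV hbound hw₀, ?_⟩
  intro lam _ s _ wn hwn hlim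
  have hs : 0 ≤ (s : ℂ).im := (Complex.ofReal_im s).ge
  exact (tendsto_eLpNorm_Kker_sub hδ hV hbound hs).comp
    (tendsto_nhdsWithin_iff.mpr ⟨hlim, .of_forall hwn⟩)
end

section
/- Let λ0 ∈ ℝ, r > 0, let j ≥ 1 be an integer, and let g : ℂ → ℂ be holomorphic on the open disc D(λ0, r). Then for every smooth compactly supported function φ : ℝ → ℂ with support contained in (λ0 − r, λ0 + r), the limit lim_{ε→0⁺} ∫_ℝ φ(λ) · g(λ + iε) · (λ − λ0 + iε)^{-j} dλ exists in ℂ. -/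
open Filter Topology

/-!
Let `I(ε) = ∫ φ(x) f(x + iε) dx`, with `f` holomorphic just above the support of `φ` and
`‖f(x + iy)‖ ≤ C y ^ (-s)` there. By the Cauchy–Riemann equations and integration by parts,
differentiating `I` in `ε` amounts to replacing `φ` by `-i φ'`, so the derivatives of `I` are
`O(ε ^ (-s))` as `ε → 0⁺`, just like `I`, up to the order to which `φ` is differentiable. Each
integration in `ε` lowers the exponent by one, and once it is below one, a last integration yields
convergence. A pole of order `j` on the real axis is the case `s = j`.
-/

open Asymptotics Complex MeasureTheory Set

section Growth

variable {E : Type*} [NormedAddCommGroup E] [NormedSpace ℝ E] {J J' : ℝ → E} {s : ℝ}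

theorem norm_sub_le_of_norm_hasDerivAt_le_rpow {C a b : ℝ} (hs : s ≠ 1) (ha : 0 < a) (hab : a ≤ b)
    (hJ : ∀ y ∈ Icc a b, HasDerivAt J (J' y) y) (hC : ∀ y ∈ Icc a b, ‖J' y‖ ≤ C * y ^ (-s)) :
    ‖J b - J a‖ ≤ C / (1 - s) * (b ^ (1 - s) - a ^ (1 - s)) := by
  have hs' : 1 - s ≠ 0 := sub_ne_zero.2 hs.symm
  have hB : ∀ y ∈ Icc a b, HasDerivAt
      (fun y : ℝ => C / (1 - s) * (y ^ (1 - s) - a ^ (1 - s))) (C * y ^ (-s)) y := by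
    intro y hy
    have hpow := Real.hasDerivAt_rpow_const (p := 1 - s) (Or.inl (ha.trans_le hy.1).ne')
    refine ((hpow.sub_const _).const_mul _).congr_deriv ?_
    rw [sub_sub_cancel_left]
    field_simp
  exact image_norm_le_of_norm_deriv_right_le_deriv_boundary' (f := fun y => J y - J a)
    (fun y hy => ((hJ y hy).sub_const _).continuousAt.continuousWithinAt)
    (fun y hy => ((hJ y (Ico_subset_Icc_self hy)).sub_const _).hasDerivWithinAt)
    (by simp) (fun y hy => (hB y hy).continuousAt.continuousWithinAt)
    (fun y hy => (hB y (Ico_subset_Icc_self hy)).hasDerivWithinAt)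
    (fun y hy => hC y (Ico_subset_Icc_self hy)) (right_mem_Icc.2 hab)

theorem isBigO_sub_rpow_sub_rpow_of_hasDerivAt (hs : s ≠ 1)
    (hJ : ∀ᶠ y in 𝓝[>] 0, HasDerivAt J (J' y) y) (hJ' : J' =O[𝓝[>] 0] fun y => y ^ (-s)) :
    (fun p : ℝ × ℝ => J p.1 - J p.2) =O[𝓝[>] 0 ×ˢ 𝓝[>] 0]
      fun p => p.1 ^ (1 - s) - p.2 ^ (1 - s) := by
  obtain ⟨C, hC⟩ := hJ'.bound
  obtain ⟨δ, hδ, hsub⟩ := mem_nhdsGT_iff_exists_Ioo_subset.1 (hJ.and hC)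
  have hle : ∀ x ∈ Ioo 0 δ, ∀ y ∈ Ioo 0 δ, x ≤ y →
      ‖J y - J x‖ ≤ ‖C / (1 - s)‖ * ‖y ^ (1 - s) - x ^ (1 - s)‖ := by
    intro x hx y hy hxy
    have hIcc : Icc x y ⊆ Ioo 0 δ := Icc_subset_Ioo hx.1 hy.2
    rw [← norm_mul]
    refine (norm_sub_le_of_norm_hasDerivAt_le_rpow (C := C) hs hx.1 hxy
      (fun t ht => (hsub (hIcc ht)).1) fun t ht => ?_).trans (Real.le_norm_self _)
    simpa only [Real.norm_of_nonneg (Real.rpow_nonneg (hIcc ht).1.le _)] using (hsub (hIcc ht)).2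
  have hIoo : Ioo 0 δ ∈ 𝓝[>] 0 := Ioo_mem_nhdsGT hδ
  refine IsBigO.of_bound ‖C / (1 - s)‖ ?_
  filter_upwards [prod_mem_prod hIoo hIoo] with ⟨x, y⟩ ⟨hx, hy⟩
  rcases le_total x y with hxy | hyx
  · simpa only [norm_sub_rev] using hle x hx y hy hxy
  · exact hle y hy x hx hyx

theorem isBigO_rpow_of_hasDerivAt (hs : 1 < s)
    (hJ : ∀ᶠ y in 𝓝[>] 0, HasDerivAt J (J' y) y) (hJ' : J' =O[𝓝[>] 0] fun y => y ^ (-s)) :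
    J =O[𝓝[>] 0] fun y => y ^ (1 - s) := by
  obtain ⟨C, hC⟩ := (isBigO_sub_rpow_sub_rpow_of_hasDerivAt hs.ne' hJ hJ').bound
  obtain ⟨b, hb⟩ := hC.curry.exists
  have hlarge : Tendsto (norm ∘ fun y : ℝ => y ^ (1 - s)) (𝓝[>] 0) atTop :=
    tendsto_norm_atTop_atTop.comp (tendsto_rpow_neg_nhdsGT_zero (by linarith))
  have hconst : (fun _ => b ^ (1 - s)) =O[𝓝[>] 0] fun y : ℝ => y ^ (1 - s) :=
    (isLittleO_const_left.2 (.inr hlarge)).isBigO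
  have hincr : (fun y => J b - J y) =O[𝓝[>] 0] fun y => y ^ (1 - s) :=
    (IsBigO.of_bound C hb).trans (hconst.sub (isBigO_refl _ _))
  have hJb : (fun _ => J b) =O[𝓝[>] 0] fun y : ℝ => y ^ (1 - s) :=
    (isLittleO_const_left.2 (.inr hlarge)).isBigO
  simpa only [sub_sub_cancel] using hJb.sub hincr

theorem exists_tendsto_of_hasDerivAt_of_isBigO_rpow [CompleteSpace E] (hs : s < 1)
    (hJ : ∀ᶠ y in 𝓝[>] 0, HasDerivAt J (J' y) y) (hJ' : J' =O[𝓝[>] 0] fun y => y ^ (-s)) :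
    ∃ L, Tendsto J (𝓝[>] 0) (𝓝 L) := by
  have hpow : Tendsto (fun y : ℝ => y ^ (1 - s)) (𝓝[>] 0) (𝓝 0) := by
    have := (Real.continuousAt_rpow_const 0 (1 - s) (Or.inr (by linarith))).tendsto
    rw [Real.zero_rpow (by linarith)] at this
    exact this.mono_left nhdsWithin_le_nhds
  have hincr : Tendsto (fun p : ℝ × ℝ => J p.1 - J p.2) (𝓝[>] 0 ×ˢ 𝓝[>] 0) (𝓝 0) := by
    refine (isBigO_sub_rpow_sub_rpow_of_hasDerivAt hs.ne hJ hJ').trans_tendsto ?_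
    simpa only [sub_zero, Function.comp_apply] using
      (hpow.comp tendsto_fst).sub (hpow.comp tendsto_snd)
  refine cauchy_map_iff_exists_tendsto.1 (cauchy_map_iff'.2 ?_)
  simpa only [tendsto_uniformity_iff_dist_tendsto_zero, dist_eq_norm, norm_zero] using hincr.norm

end Growth

section WeightedIntegral

variable {X 𝕜 E : Type*} [TopologicalSpace X] [NormedField 𝕜] [NormedAddCommGroup E]
  [NormedSpace 𝕜 E] {φ : X → 𝕜}

theorem norm_smul_le_of_mem_tsupport {x : X} {v : E} {M : ℝ} (hv : x ∈ tsupport φ → ‖v‖ ≤ M) :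
    ‖φ x • v‖ ≤ ‖φ x‖ * M := by
  by_cases hx : x ∈ tsupport φ
  · rw [norm_smul]
    exact mul_le_mul_of_nonneg_left (hv hx) (norm_nonneg _)
  · simp [image_eq_zero_of_notMem_tsupport hx]

variable [MeasurableSpace X] [OpensMeasurableSpace X] {μ : Measure X}
  [IsFiniteMeasureOnCompacts μ]

theorem integrable_smul_of_continuousOn_tsupport {u : X → E} (hφ : Continuous φ)
    (hc : HasCompactSupport φ) (hu : ContinuousOn u (tsupport φ)) :
    Integrable (fun x => φ x • u x) μ := by
  refine (integrableOn_iff_integrable_of_support_subset ?_).1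
    ((hφ.continuousOn.smul hu).integrableOn_compact' hc (isClosed_tsupport φ).measurableSet)
  exact (Function.support_smul_subset_left φ u).trans (subset_tsupport φ)

theorem hasDerivAt_integral_smul_of_hasCompactSupport [NormedSpace ℝ E] [SMulCommClass ℝ 𝕜 E]
    {F F' : ℝ → X → E} {V : Set ℝ} {y : ℝ} (hφ : Continuous φ) (hc : HasCompactSupport φ)
    (hV : IsOpen V) (hy : y ∈ V) (hF : ∀ t ∈ V, ContinuousOn (F t) (tsupport φ))
    (hF' : ContinuousOn (fun p : ℝ × X => F' p.1 p.2) (V ×ˢ tsupport φ))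
    (hderiv : ∀ t ∈ V, ∀ x ∈ tsupport φ, HasDerivAt (F · x) (F' t x) t) :
    HasDerivAt (fun t => ∫ x, φ x • F t x ∂μ) (∫ x, φ x • F' y x ∂μ) y := by
  obtain ⟨ρ, hρ, hρV⟩ := Metric.nhds_basis_closedBall.mem_iff.1 (hV.mem_nhds hy)
  obtain ⟨M, hM⟩ := ((isCompact_closedBall y ρ).prod hc.isCompact).exists_bound_of_continuousOn
    (hF'.mono (prod_mono_left hρV))
  have hbound : ∀ x, ∀ t ∈ Metric.closedBall y ρ, ‖φ x • F' t x‖ ≤ ‖φ x‖ * M :=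
    fun x t ht => norm_smul_le_of_mem_tsupport fun hx => hM (t, x) ⟨ht, hx⟩
  have hderiv_smul : ∀ x, ∀ t ∈ Metric.closedBall y ρ,
      HasDerivAt (fun t => φ x • F t x) (φ x • F' t x) t := by
    intro x t ht
    by_cases hx : x ∈ tsupport φ
    · exact (hderiv t (hρV ht) x hx).const_smul (φ x)
    · simpa [image_eq_zero_of_notMem_tsupport hx] using hasDerivAt_const t (0 : E)
  have hint : ∀ t ∈ V, Integrable (fun x => φ x • F t x) μ := fun t ht =>
    integrable_smul_of_continuousOn_tsupport hφ hc (hF t ht)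
  have hF'y : ContinuousOn (F' y) (tsupport φ) :=
    hF'.comp (f := fun x => (y, x)) (by fun_prop) fun x hx => ⟨hy, hx⟩
  exact (hasDerivAt_integral_of_dominated_loc_of_deriv_le (Metric.closedBall_mem_nhds y hρ)
    (by filter_upwards [hV.mem_nhds hy] with t ht using (hint t ht).aestronglyMeasurable)
    (hint y hy) (integrable_smul_of_continuousOn_tsupport hφ hc hF'y).aestronglyMeasurable
    (.of_forall hbound) ((hφ.integrable_of_hasCompactSupport hc).norm.mul_const M)
    (.of_forall hderiv_smul)).2

end WeightedIntegral

section HorizontalIntegral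

variable {E : Type*} [NormedAddCommGroup E] [NormedSpace ℂ E]

/-- The integral of `f : ℂ → E` against `φ` along the horizontal line `Im z = y`. Its limit as
`y → 0⁺` is the pairing of `φ` with the distributional boundary value `f(x + i0)`. -/
noncomputable def horizontalIntegral (φ : ℝ → ℂ) (f : ℂ → E) (y : ℝ) : E :=
  ∫ x : ℝ, φ x • f (x + y * I)

variable {φ : ℝ → ℂ} {f : ℂ → E} {U V : Set ℝ} {y : ℝ}

theorem add_mul_I_mem_reProdIm {x : ℝ} (hx : x ∈ U) (hy : y ∈ V) : (x + y * I : ℂ) ∈ U ×ℂ V := by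
  simpa [mem_reProdIm] using ⟨hx, hy⟩

theorem integrable_smul_horizontal (hφ : Continuous φ) (hc : HasCompactSupport φ)
    (hφU : tsupport φ ⊆ U) (hf : ContinuousOn f (U ×ℂ V)) (hy : y ∈ V) :
    Integrable fun x : ℝ => φ x • f (x + y * I) :=
  integrable_smul_of_continuousOn_tsupport hφ hc <|
    hf.comp (by fun_prop) fun _ hx => add_mul_I_mem_reProdIm (hφU hx) hy

theorem norm_horizontalIntegral_le {M : ℝ} (hφ : Continuous φ) (hc : HasCompactSupport φ)
    (hM : ∀ x ∈ tsupport φ, ‖f (x + y * I)‖ ≤ M) :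
    ‖horizontalIntegral φ f y‖ ≤ (∫ x, ‖φ x‖) * M := by
  rw [← integral_mul_const]
  exact norm_integral_le_of_norm_le ((hφ.integrable_of_hasCompactSupport hc).norm.mul_const M)
    (.of_forall fun x => norm_smul_le_of_mem_tsupport (hM x))

variable [CompleteSpace E]

theorem horizontalIntegral_deriv_right (hU : IsOpen U) (hV : IsOpen V)
    (hf : DifferentiableOn ℂ f (U ×ℂ V)) (hφ : ContDiff ℝ 1 φ) (hc : HasCompactSupport φ)
    (hφU : tsupport φ ⊆ U) (hy : y ∈ V) :
    horizontalIntegral φ (deriv f) y = -horizontalIntegral (deriv φ) f y := by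
  have hUV : IsOpen (U ×ℂ V) := hU.reProdIm hV
  have hderiv : ∀ x ∈ tsupport φ,
      HasDerivAt (fun x : ℝ => f (x + y * I)) (deriv f (x + y * I)) x := by
    intro x hx
    have hfx := hf.hasDerivAt (hUV.mem_nhds (add_mul_I_mem_reProdIm (hφU hx) hy))
    have hline : HasDerivAt (fun x : ℝ => (x + y * I : ℂ)) 1 x :=
      ((hasDerivAt_id (x : ℂ)).add_const (y * I)).comp_ofReal
    simpa only [one_smul, Function.comp_def] using hfx.scomp x hline
  refine integral_bilinear_hasDerivAt_right_eq_neg_left_of_integrable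
    (L := ContinuousLinearMap.lsmul ℝ ℂ) (fun x _ => (hφ.differentiable_one x).hasDerivAt) hderiv
    ?_ ?_ ?_
  · exact integrable_smul_horizontal hφ.continuous hc hφU (hf.deriv hUV).continuousOn hy
  · exact integrable_smul_horizontal hφ.continuous_deriv_one hc.deriv
      (tsupport_deriv_subset.trans hφU) hf.continuousOn hy
  · exact integrable_smul_horizontal hφ.continuous hc hφU hf.continuousOn hy

theorem hasDerivAt_horizontalIntegral (hU : IsOpen U) (hV : IsOpen V)
    (hf : DifferentiableOn ℂ f (U ×ℂ V)) (hφ : Continuous φ) (hc : HasCompactSupport φ)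
    (hφU : tsupport φ ⊆ U) (hy : y ∈ V) :
    HasDerivAt (horizontalIntegral φ f) (I • horizontalIntegral φ (deriv f) y) y := by
  have hUV : IsOpen (U ×ℂ V) := hU.reProdIm hV
  have hmaps : MapsTo (fun p : ℝ × ℝ => (p.2 + p.1 * I : ℂ)) (V ×ˢ tsupport φ) (U ×ℂ V) :=
    fun p hp => add_mul_I_mem_reProdIm (hφU hp.2) hp.1
  have hderiv : ∀ t ∈ V, ∀ x ∈ tsupport φ,
      HasDerivAt (fun t : ℝ => f (x + t * I)) (I • deriv f (x + t * I)) t := by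
    intro t ht x hx
    have hft := hf.hasDerivAt (hUV.mem_nhds (add_mul_I_mem_reProdIm (hφU hx) ht))
    have hline : HasDerivAt (fun t : ℝ => (x + t * I : ℂ)) I t := by
      simpa using (((hasDerivAt_id (t : ℂ)).mul_const I).const_add (x : ℂ)).comp_ofReal
    exact hft.scomp t hline
  have h := hasDerivAt_integral_smul_of_hasCompactSupport (μ := volume) hφ hc hV hy
    (fun t ht => hf.continuousOn.comp (by fun_prop) fun x hx => hmaps (mk_mem_prod ht hx))
    (((hf.deriv hUV).continuousOn.comp (by fun_prop) hmaps).const_smul I) hderiv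
  simp only [smul_comm _ I, integral_smul] at h
  exact h

theorem hasDerivAt_horizontalIntegral_deriv_left (hU : IsOpen U) (hV : IsOpen V)
    (hf : DifferentiableOn ℂ f (U ×ℂ V)) (hφ : ContDiff ℝ 1 φ) (hc : HasCompactSupport φ)
    (hφU : tsupport φ ⊆ U) (hy : y ∈ V) :
    HasDerivAt (horizontalIntegral φ f) (-I • horizontalIntegral (deriv φ) f y) y := by
  have h := hasDerivAt_horizontalIntegral hU hV hf hφ.continuous hc hφU hy
  rwa [horizontalIntegral_deriv_right hU hV hf hφ hc hφU hy, smul_neg, ← neg_smul] at h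

end HorizontalIntegral

section BoundaryValue

variable {E : Type*} [NormedAddCommGroup E] [NormedSpace ℂ E] [CompleteSpace E]
  {f : ℂ → E} {U : Set ℝ} {C δ s : ℝ} {n : ℕ} {φ : ℝ → ℂ}

theorem horizontalIntegral_isBigO_rpow {t : ℝ} (hU : IsOpen U) (hδ : 0 < δ)
    (hf : DifferentiableOn ℂ f (U ×ℂ Ioo 0 δ))
    (hC : ∀ z ∈ U ×ℂ Ioo 0 δ, ‖f z‖ ≤ C * z.im ^ (-s)) (hst : s ≤ t) (hnt : n < t)
    (hφ : ContDiff ℝ n φ) (hc : HasCompactSupport φ) (hφU : tsupport φ ⊆ U) :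
    horizontalIntegral φ f =O[𝓝[>] 0] fun y => y ^ (n - t) := by
  induction n generalizing φ with
  | zero =>
    have hbase : horizontalIntegral φ f =O[𝓝[>] 0] fun y => y ^ (-s) := by
      refine IsBigO.of_bound ((∫ x, ‖φ x‖) * C) ?_
      filter_upwards [Ioo_mem_nhdsGT hδ] with y hy
      rw [Real.norm_of_nonneg (Real.rpow_nonneg hy.1.le _), mul_assoc]
      refine norm_horizontalIntegral_le hφ.continuous hc fun x hx => ?_
      simpa using hC _ (add_mul_I_mem_reProdIm (hφU hx) hy)
    refine hbase.trans (IsBigO.of_bound 1 ?_)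
    filter_upwards [Ioo_mem_nhdsGT one_pos] with y hy
    rw [one_mul, Real.norm_of_nonneg (Real.rpow_nonneg hy.1.le _),
      Real.norm_of_nonneg (Real.rpow_nonneg hy.1.le _)]
    exact Real.rpow_le_rpow_of_exponent_ge hy.1 hy.2.le (by simpa using hst)
  | succ n ih =>
    push_cast at hφ hnt ⊢
    have hderiv : horizontalIntegral (deriv φ) f =O[𝓝[>] 0] fun y => y ^ (-(t - n)) := by
      simpa only [neg_sub] using ih (by linarith) (contDiff_succ_iff_deriv.1 hφ).2.2 hc.deriv
        (tsupport_deriv_subset.trans hφU)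
    have h := isBigO_rpow_of_hasDerivAt (by linarith) (by
      filter_upwards [Ioo_mem_nhdsGT hδ] with y hy
      exact hasDerivAt_horizontalIntegral_deriv_left hU isOpen_Ioo hf
        (hφ.of_le (by simp)) hc hφU hy) (hderiv.const_smul_left (-I))
    convert h using 3
    ring

theorem exists_tendsto_horizontalIntegral (hU : IsOpen U) (hδ : 0 < δ)
    (hf : DifferentiableOn ℂ f (U ×ℂ Ioo 0 δ))
    (hC : ∀ z ∈ U ×ℂ Ioo 0 δ, ‖f z‖ ≤ C * z.im ^ (-s)) (hs : s < n + 1)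
    (hφ : ContDiff ℝ (n + 1) φ) (hc : HasCompactSupport φ) (hφU : tsupport φ ⊆ U) :
    ∃ L, Tendsto (horizontalIntegral φ f) (𝓝[>] 0) (𝓝 L) := by
  -- `s` is raised to a non-integer `t`, as integrating `y⁻¹` would produce a logarithm.
  obtain ⟨t, hmax, htn⟩ : ∃ t : ℝ, max s n < t ∧ t < n + 1 :=
    exists_between (max_lt hs (lt_add_one _))
  obtain ⟨hst, hnt⟩ := max_lt_iff.1 hmax
  have hderiv : horizontalIntegral (deriv φ) f =O[𝓝[>] 0] fun y => y ^ (-(t - n)) := by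
    simpa only [neg_sub] using horizontalIntegral_isBigO_rpow hU hδ hf hC hst.le hnt
      (contDiff_succ_iff_deriv.1 hφ).2.2 hc.deriv (tsupport_deriv_subset.trans hφU)
  refine exists_tendsto_of_hasDerivAt_of_isBigO_rpow (by linarith) ?_ (hderiv.const_smul_left (-I))
  filter_upwards [Ioo_mem_nhdsGT hδ] with y hy
  exact hasDerivAt_horizontalIntegral_deriv_left hU isOpen_Ioo hf (hφ.of_le (by simp)) hc hφU hy

end BoundaryValue

theorem exists_reProdIm_subset_closedBall {a r : ℝ} {K : Set ℝ} (hK : IsClosed K)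
    (hKr : K ⊆ Metric.ball a r) : ∃ ρ < r, ∃ U, IsOpen U ∧ K ⊆ U ∧ ∃ δ > 0,
      U ×ℂ Ioo 0 δ ⊆ Metric.closedBall (a : ℂ) ρ := by
  obtain ⟨R, hR, hKR⟩ := exists_lt_subset_ball hK hKr
  refine ⟨(R + r) / 2, by linarith, Metric.ball a R, Metric.isOpen_ball, hKR, (r - R) / 2,
    by linarith, fun z ⟨hre, him⟩ => ?_⟩
  have hre' : |z.re - a| < R := by simpa [Real.dist_eq] using hre
  have him' : |z.im| < (r - R) / 2 := by simpa [abs_of_pos him.1] using him.2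
  rw [Metric.mem_closedBall, Complex.dist_eq]
  have h := norm_le_abs_re_add_abs_im (z - a)
  simp only [sub_re, ofReal_re, sub_im, ofReal_im, sub_zero] at h
  linarith

theorem norm_inv_pow_sub_ofReal_le {a : ℝ} {z : ℂ} (hz : 0 < z.im) (j : ℕ) :
    ‖((z - a) ^ j)⁻¹‖ ≤ z.im ^ (-(j : ℝ)) := by
  have hle : z.im ≤ ‖z - a‖ := by
    simpa using (le_abs_self _).trans (abs_im_le_norm (z - a))
  rw [norm_inv, norm_pow, Real.rpow_neg hz.le, Real.rpow_natCast]
  gcongr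

theorem stmt17_general {E : Type*} [NormedAddCommGroup E] [NormedSpace ℂ E] [CompleteSpace E]
    (lam0 r : ℝ) (j : ℕ) (g : ℂ → E)
    (hg : DifferentiableOn ℂ g (Metric.ball (lam0 : ℂ) r ∩ {z | 0 < z.im}))
    (hgc : ContinuousOn g (Metric.ball (lam0 : ℂ) r ∩ {z | 0 ≤ z.im}))
    (φ : ℝ → ℂ) (hφ : ContDiff ℝ (j + 1) φ) (hφc : HasCompactSupport φ)
    (hφsupp : tsupport φ ⊆ Set.Ioo (lam0 - r) (lam0 + r)) :
    ∃ L : E, Tendsto (fun ε : ℝ =>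
        ∫ lam : ℝ,
          φ lam • (((lam : ℂ) - lam0 + ε * I) ^ j)⁻¹ • g (lam + ε * I))
      (𝓝[>] 0) (𝓝 L) := by
  rw [← Real.ball_eq_Ioo] at hφsupp
  obtain ⟨ρ, hρ, U, hU, hφU, δ, hδ, hball⟩ :=
    exists_reProdIm_subset_closedBall (isClosed_tsupport φ) hφsupp
  have hρr : Metric.closedBall (lam0 : ℂ) ρ ⊆ Metric.ball (lam0 : ℂ) r :=
    Metric.closedBall_subset_ball hρ
  obtain ⟨C, hC⟩ := ((isCompact_closedBall (lam0 : ℂ) ρ).inter_right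
    (isClosed_le continuous_const continuous_im)).exists_bound_of_continuousOn
    (hgc.mono (inter_subset_inter_left _ hρr))
  have hdiff : DifferentiableOn ℂ (fun z : ℂ => ((z - lam0) ^ j)⁻¹ • g z) (U ×ℂ Ioo 0 δ) := by
    refine .smul (.inv (by fun_prop) fun z hz => pow_ne_zero _ fun h => ?_)
      (hg.mono fun z hz => ⟨hρr (hball hz), hz.2.1⟩)
    simpa [sub_eq_zero.1 h] using hz.2.1
  have hgrowth : ∀ z ∈ U ×ℂ Ioo 0 δ, ‖((z - lam0) ^ j)⁻¹ • g z‖ ≤ C * z.im ^ (-(j : ℝ)) := by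
    intro z hz
    have hgz : ‖g z‖ ≤ C := hC z ⟨hball hz, hz.2.1.le⟩
    rw [norm_smul, mul_comm]
    exact mul_le_mul hgz (norm_inv_pow_sub_ofReal_le hz.2.1 j) (norm_nonneg _)
      ((norm_nonneg _).trans hgz)
  obtain ⟨L, hL⟩ :=
    exists_tendsto_horizontalIntegral hU hδ hdiff hgrowth (lt_add_one _) hφ hφc hφU
  refine ⟨L, hL.congr fun ε => ?_⟩
  simp only [horizontalIntegral, add_sub_right_comm]

/-- Let `λ0 ∈ ℝ`, `r > 0`, `j ≥ 1` an integer, and `g : ℂ → ℂ`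
holomorphic on the open disc `D(λ0, r)`. Then for every smooth compactly supported
`φ : ℝ → ℂ` with support contained in `(λ0 - r, λ0 + r)`, the limit
`lim_{ε→0⁺} ∫_ℝ φ(λ) g(λ + iε) (λ - λ0 + iε)^{-j} dλ` exists in `ℂ`. -/
theorem stmt17 (lam0 r : ℝ) (hr : 0 < r) (j : ℕ) (hj : 1 ≤ j)
    (g : ℂ → ℂ) (hg : DifferentiableOn ℂ g (Metric.ball (lam0 : ℂ) r))
    (φ : ℝ → ℂ) (hφ : ContDiff ℝ (⊤ : ℕ∞) φ) (hφc : HasCompactSupport φ)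
    (hφsupp : tsupport φ ⊆ Set.Ioo (lam0 - r) (lam0 + r)) :
    ∃ L : ℂ, Tendsto (fun ε : ℝ =>
        ∫ lam : ℝ,
          φ lam * g ((lam : ℂ) + (ε : ℂ) * Complex.I)
            * ((((lam : ℂ) - (lam0 : ℂ) + (ε : ℂ) * Complex.I)) ^ j)⁻¹)
      (𝓝[>] (0 : ℝ)) (𝓝 L) := by
  simpa only [smul_eq_mul, mul_assoc, mul_comm (g _)] using
    stmt17_general lam0 r j g (hg.mono inter_subset_left) (hg.continuousOn.mono inter_subset_left)
      φ (hφ.of_le (mod_cast le_top)) hφc hφsupp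
end
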